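/- For every prime ℓ and every integer a ≥ 1, the symplectic group Sp_{2a}(𝔽_ℓ) has exactly one irreducible complex character of ℓ-defect zero (namely the Steinberg character). -/

import Mathlib

open Matrix

/-!
Write `G` for the symplectic group, `B = TU` for its Borel subgroup, with unipotent radical `U`.

*Uniqueness.* Modulo `ℓ`, the central idempotent of an irreducible character of defect zero becomes
an idempotent of the group algebra whose coefficients form a class function vanishing at every
element that commutes with an element of order `ℓ`. The sum of such a class function over a coset
`gU` is unchanged when `g` moves in `UgU`, so by the Bruhat decomposition it may be computed on the
normalizer of the torus; there it vanishes, unless `g` represents the longest Weyl element, in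
which case it does not depend on `g`. The coset sums of two such functions are thus proportional.
Since `U` is an `ℓ`-group, a nonzero idempotent has a nonzero coset sum, and proportionality makes
the product of two such idempotents nonzero; but the central idempotents of distinct irreducible
characters are orthogonal.

*Existence.* The Steinberg module consists of the functions on `G / B` with zero sum over the fibres
of `G / B → G / P` for all minimal parabolic subgroups `P`. Restriction to the open Bruhat cell is
an isomorphism onto the functions on `U`, so its dimension is the full `ℓ`-part of the order of
`G`, and it is irreducible because its vectors fixed by `B` form a line.
-/

namespace DefectZero

open MonoidAlgebra Representation

section FixedVectors

theorem exists_ne_zero_forall_smul_eq {ℓ : ℕ} [Fact ℓ.Prime] {H M : Type*} [Group H] [Finite H]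
    (hH : IsPGroup ℓ H) [AddCommGroup M] [Module (ZMod ℓ) M] [DistribMulAction H M]
    [Nontrivial M] : ∃ w : M, w ≠ 0 ∧ ∀ h : H, h • w = w := by
  obtain ⟨v, hv⟩ := exists_ne (0 : M)
  let span : Submodule (ZMod ℓ) M := Submodule.span (ZMod ℓ) (MulAction.orbit H v)
  let S : SubMulAction H M :=
    { carrier := span
      smul_mem' := fun h x hx => by
        refine (Submodule.map_span_le
          ((DistribSMul.toAddMonoidHom M h).toZModLinearMap ℓ) _ span).2 ?_ ⟨x, hx, rfl⟩
        rintro _ ⟨h', rfl⟩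
        exact Submodule.subset_span ⟨h * h', mul_smul h h' v⟩ }
  have hvS : v ∈ span := Submodule.subset_span (MulAction.mem_orbit_self v)
  have : Module.Finite (ZMod ℓ) span := Module.Finite.span_of_finite _ (Set.finite_range _)
  have : Finite S := Module.finite_of_finite (ZMod ℓ) (M := span)
  have : Nontrivial span := ⟨⟨v, hvS⟩, 0, fun h => hv (congrArg Subtype.val h)⟩
  have hcard : ℓ ∣ Nat.card S := by
    change ℓ ∣ Nat.card span
    rw [Module.natCard_eq_pow_finrank (K := ZMod ℓ), Nat.card_zmod]
    exact dvd_pow_self _ Module.finrank_pos.ne'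
  have hzero : (⟨0, span.zero_mem⟩ : S) ∈ MulAction.fixedPoints H S :=
    fun h => Subtype.ext (smul_zero h)
  obtain ⟨w, hw, hne⟩ := hH.exists_fixed_point_of_prime_dvd_card_of_fixed_point S hcard hzero
  exact ⟨w, fun h => hne (Subtype.ext h.symm), fun h => congrArg Subtype.val (hw h)⟩

open scoped Classical in
theorem exists_eq_sum_smul_of_stabilizer_eq_bot {H X k : Type*} [Group H] [Fintype H]
    [MulAction H X] [AddCommMonoid k] (f : X → k) (hf : ∀ (h : H) x, f (h • x) = f x)
    (hstab : ∀ x, f x ≠ 0 → MulAction.stabilizer H x = ⊥) :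
    ∃ a : X → k, ∀ x, f x = ∑ h : H, a (h • x) := by
  let rep : X → X := fun x => (Quotient.mk (MulAction.orbitRel H X) x).out
  have rep_mem : ∀ x, ∃ h : H, h • x = rep x := fun x =>
    Quotient.mk_out (s := MulAction.orbitRel H X) x
  have rep_smul : ∀ (h : H) x, rep (h • x) = rep x := fun h x =>
    congrArg Quotient.out (Quotient.sound (s := MulAction.orbitRel H X) ⟨h, rfl⟩)
  refine ⟨fun x => if x = rep x then f x else 0, fun x => ?_⟩
  simp only [hf, rep_smul]
  by_cases hx : f x = 0
  · simp [hx]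
  obtain ⟨h₀, h₀x⟩ := rep_mem x
  rw [Finset.sum_eq_single h₀ (fun h _ hne => if_neg fun hh => hne ?_) (by simp), if_pos h₀x]
  have : h₀⁻¹ * h ∈ MulAction.stabilizer H x := by
    rw [MulAction.mem_stabilizer_iff, mul_smul, hh, ← h₀x, inv_smul_smul]
  rw [hstab x hx, Subgroup.mem_bot, inv_mul_eq_one] at this
  exact this.symm

theorem exists_pow_ne_one_pow_eq_one {ℓ : ℕ} {H : Type*} [Group H]
    (hH : IsPGroup ℓ H) {d : H} (hd : d ≠ 1) : ∃ n : ℕ, d ^ n ≠ 1 ∧ (d ^ n) ^ ℓ = 1 := by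
  classical
  have hex := hH d
  have hpos : Nat.find hex ≠ 0 := fun h0 => hd (by simpa [h0] using Nat.find_spec hex)
  obtain ⟨m, hm⟩ := Nat.exists_eq_succ_of_ne_zero hpos
  refine ⟨ℓ ^ m, Nat.find_min hex (by omega), ?_⟩
  rw [← pow_mul, ← pow_succ, ← Nat.succ_eq_add_one, ← hm]
  exact Nat.find_spec hex

end FixedVectors

/-- A class function supported on the conjugacy classes of `ℓ`-defect zero, i.e. vanishing at
every element whose centralizer contains an element of order `ℓ`. -/
structure IsDefectZeroClassFunction {G k : Type*} [Group G] [Zero k] (ℓ : ℕ) (f : G → k) :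
    Prop where
  conj : ∀ g h : G, f (h * g * h⁻¹) = f g
  eq_zero : ∀ ⦃g d : G⦄, d ≠ 1 → d ^ ℓ = 1 → Commute d g → f g = 0

/-- The sum of `f` over the left coset `gU`, as a function of `g`. -/
noncomputable def cosetSum {G k : Type*} [Group G] [AddCommMonoid k] (U : Subgroup G)
    (f : G → k) (g : G) : k := ∑ᶠ u : U, f (g * u)

/-- The sum of the elements of the subgroup `U` in the group algebra. -/
noncomputable def subgroupSum (k : Type*) {G : Type*} [Group G] [Semiring k] (U : Subgroup G) :
    MonoidAlgebra k G := ∑ᶠ u : U, single (u : G) 1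

section GroupAlgebra

variable {G k : Type*} [Group G]

lemma cosetSum_eq_sum [AddCommMonoid k] (U : Subgroup G) [Fintype U] (f : G → k) (g : G) :
    cosetSum U f g = ∑ u : U, f (g * u) := finsum_eq_sum_of_fintype _

lemma IsDefectZeroClassFunction.exists_eq_sum_conj [AddCommMonoid k] {ℓ : ℕ} {f : G → k}
    (hf : IsDefectZeroClassFunction ℓ f) {U : Subgroup G} [Fintype U] (hU : IsPGroup ℓ U) :
    ∃ a : G → k, ∀ g, f g = ∑ u : U, a ((u : G)⁻¹ * g * u) := by
  let : MulAction U G := MulAction.compHom G (ConjAct.toConjAct.toMonoidHom.comp U.subtype)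
  have smul_def : ∀ (u : U) (g : G), u • g = u * g * (u : G)⁻¹ := fun _ _ => rfl
  obtain ⟨a, ha⟩ := exists_eq_sum_smul_of_stabilizer_eq_bot (H := U) f
    (fun u g => hf.conj g u) fun g hg => by
      rw [Subgroup.eq_bot_iff_forall]
      intro u hu
      by_contra hu1
      obtain ⟨n, hn, hnℓ⟩ := exists_pow_ne_one_pow_eq_one hU hu1
      have hcomm : Commute (u : G) g := mul_inv_eq_iff_eq_mul.1 hu
      exact hg (hf.eq_zero (d := (u : G) ^ n) (by exact_mod_cast hn) (by exact_mod_cast hnℓ)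
        (hcomm.pow_left n))
  refine ⟨a, fun g => (ha g).trans ?_⟩
  rw [← Equiv.sum_comp (Equiv.inv U)]
  simp [smul_def]

lemma coeff_mul_subgroupSum [Finite G] [Semiring k] (U : Subgroup G)
    (e : MonoidAlgebra k G) (g : G) :
    (e * subgroupSum k U).coeff g = cosetSum U e.coeff g := by
  have := Fintype.ofFinite U
  rw [subgroupSum, finsum_eq_sum_of_fintype, cosetSum_eq_sum, Finset.mul_sum, coeff_sum,
    Finsupp.finsetSum_apply, ← Equiv.sum_comp (Equiv.inv U)]
  simp

lemma commute_of_coeff_conj [CommSemiring k] {e : MonoidAlgebra k G}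
    (he : ∀ g h : G, e.coeff (h * g * h⁻¹) = e.coeff g) (x : MonoidAlgebra k G) :
    Commute e x := by
  induction x using MonoidAlgebra.induction_linear with
  | zero => exact Commute.zero_right e
  | add x y hx hy => exact hx.add_right hy
  | single g r =>
    ext h
    have := he (g⁻¹ * h) g
    simp only [mul_inv_cancel_left] at this
    simp [this, mul_comm r]

lemma IsDefectZeroClassFunction.exists_eq_sum_conj_single [Finite G] [CommSemiring k] {ℓ : ℕ}
    {e : MonoidAlgebra k G} (he : IsDefectZeroClassFunction ℓ e.coeff) {U : Subgroup G}
    [Fintype U] (hU : IsPGroup ℓ U) :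
    ∃ a : MonoidAlgebra k G,
      e = ∑ u : U, single (u : G) 1 * a * single (u : G)⁻¹ 1 := by
  obtain ⟨a, ha⟩ := he.exists_eq_sum_conj hU
  refine ⟨ofCoeff (Finsupp.equivFunOnFinite.symm a), ?_⟩
  ext g
  rw [ha g, coeff_sum, Finsupp.finsetSum_apply]
  simp [mul_assoc]

/- Since `e` is a relative trace `∑ u a u⁻¹`, every `U`-fixed `w` in the ideal of `e` equals
`e * w = (∑ u) * (a * w)`, which `e` kills as soon as it kills `∑ u`. -/
theorem mul_subgroupSum_ne_zero [Finite G] [CommRing k] {ℓ : ℕ} [Fact ℓ.Prime] [CharP k ℓ]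
    {U : Subgroup G} (hU : IsPGroup ℓ U) {e : MonoidAlgebra k G}
    (he : IsDefectZeroClassFunction ℓ e.coeff) (hidem : IsIdempotentElem e) (hne : e ≠ 0) :
    e * subgroupSum k U ≠ 0 := by
  intro hzero
  have := Fintype.ofFinite U
  let I : Ideal (MonoidAlgebra k G) := Ideal.span {e}
  let : Module (ZMod ℓ) I := AddCommGroup.zmodModule (n := ℓ) fun x => by
    ext g
    rw [Submodule.coe_smul_of_tower, coeff_smul_apply, nsmul_eq_mul, CharP.cast_eq_zero, zero_mul]
    rfl
  let : DistribMulAction U I := DistribMulAction.compHom I ((of k G).comp U.subtype)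
  have : Nontrivial I := ⟨⟨e, Ideal.mem_span_singleton_self e⟩, 0, fun h =>
    hne (congrArg Subtype.val h)⟩
  obtain ⟨⟨w, hwI⟩, hw0, hfix⟩ := exists_ne_zero_forall_smul_eq (M := I) hU
  have single_mul_w : ∀ u : U, single (u : G) 1 * w = w := fun u => congrArg Subtype.val (hfix u)
  obtain ⟨b, rfl⟩ := Ideal.mem_span_singleton'.1 hwI
  have e_mul_w : e * (b * e) = b * e := by
    rw [(commute_of_coeff_conj he.conj _).eq, mul_assoc, hidem]
  obtain ⟨a, ha⟩ := he.exists_eq_sum_conj_single hU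
  have w_eq : b * e = subgroupSum k U * (a * (b * e)) := by
    conv_lhs => rw [← e_mul_w]
    nth_rw 1 [ha]
    rw [subgroupSum, finsum_eq_sum_of_fintype, Finset.sum_mul, Finset.sum_mul]
    refine Finset.sum_congr rfl fun u _ => ?_
    rw [mul_assoc, mul_assoc, ← Subgroup.coe_inv, single_mul_w]
  refine hw0 (Subtype.ext ?_)
  change b * e = 0
  rw [← e_mul_w, w_eq, ← mul_assoc, hzero, zero_mul]

theorem mul_ne_zero_of_cosetSum_proportional [Finite G] [Field k] {ℓ : ℕ} [Fact ℓ.Prime] [CharP k ℓ]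
    {U : Subgroup G} (hU : IsPGroup ℓ U) {e₁ e₂ : MonoidAlgebra k G}
    (h₁ : IsDefectZeroClassFunction ℓ e₁.coeff) (h₂ : IsDefectZeroClassFunction ℓ e₂.coeff)
    (hprop : ∀ g g', cosetSum U e₁.coeff g * cosetSum U e₂.coeff g' =
      cosetSum U e₁.coeff g' * cosetSum U e₂.coeff g)
    (hidem₁ : IsIdempotentElem e₁) (hidem₂ : IsIdempotentElem e₂) (hne₁ : e₁ ≠ 0)
    (hne₂ : e₂ ≠ 0) : e₁ * e₂ ≠ 0 := by
  intro hzero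
  obtain ⟨g₀, hg₀⟩ : ∃ g₀, cosetSum U e₂.coeff g₀ ≠ 0 := by
    by_contra! h
    refine mul_subgroupSum_ne_zero hU h₂ hidem₂ hne₂ ?_
    ext g
    rw [coeff_mul_subgroupSum, h]
    rfl
  obtain ⟨c, hc⟩ : ∃ c : k, e₁ * subgroupSum k U = c • (e₂ * subgroupSum k U) := by
    refine ⟨cosetSum U e₁.coeff g₀ / cosetSum U e₂.coeff g₀, ?_⟩
    ext g
    rw [coeff_smul_apply, coeff_mul_subgroupSum, coeff_mul_subgroupSum, smul_eq_mul,
      div_mul_eq_mul_div, eq_div_iff hg₀, hprop]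
  refine mul_subgroupSum_ne_zero hU h₁ hidem₁ hne₁ ?_
  calc e₁ * subgroupSum k U = e₁ * (e₁ * subgroupSum k U) := by rw [← mul_assoc, hidem₁]
    _ = c • (e₁ * e₂ * subgroupSum k U) := by rw [hc, mul_smul_comm, mul_assoc]
    _ = 0 := by rw [hzero, zero_mul, smul_zero]

end GroupAlgebra

section CosetSum

variable {G k : Type*} [Group G] {U : Subgroup G} {f : G → k}

lemma cosetSum_mul_right [AddCommMonoid k] (f : G → k) (g : G) {u : G} (hu : u ∈ U) :
    cosetSum U f (g * u) = cosetSum U f g := by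
  refine finsum_eq_of_bijective _ (Equiv.mulLeft (⟨u, hu⟩ : U)).bijective fun v => ?_
  simp [mul_assoc]

lemma cosetSum_conj [AddCommMonoid k] (hf : ∀ g h : G, f (h * g * h⁻¹) = f g) (g : G) {d : G}
    (hd : ∀ u, d * u * d⁻¹ ∈ U ↔ u ∈ U) : cosetSum U f (d * g * d⁻¹) = cosetSum U f g := by
  symm
  refine finsum_eq_of_bijective _
    ((MulAut.conj d).toEquiv.subtypeEquiv fun u => (hd u).symm).bijective fun v => ?_
  rw [← hf _ d]
  simp [mul_assoc]

lemma cosetSum_mul_left [AddCommMonoid k] (hf : ∀ g h : G, f (h * g * h⁻¹) = f g) (g : G) {u : G}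
    (hu : u ∈ U) : cosetSum U f (u * g) = cosetSum U f g := by
  rw [← cosetSum_mul_right f (u * g) (inv_mem hu)]
  refine cosetSum_conj hf g fun v => ?_
  rw [U.mul_mem_cancel_right (inv_mem hu), U.mul_mem_cancel_left hu]

lemma sum_eq_zero_of_perm {α : Type*} [Fintype α] {ℓ : ℕ} [Fact ℓ.Prime] [Semiring k] [CharP k ℓ]
    {σ : Equiv.Perm α} (hσ : σ ^ ℓ = 1) {f : α → k} (hf : ∀ x, f (σ x) = f x)
    (h0 : ∀ x, σ x = x → f x = 0) : ∑ x, f x = 0 := by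
  classical
  rw [← Finset.sum_fiberwise_of_maps_to (t := Finset.univ.image f) (g := f) (by simp)]
  refine Finset.sum_eq_zero fun c _ => ?_
  rw [Finset.sum_congr rfl fun x hx => (Finset.mem_filter.1 hx).2, Finset.sum_const, nsmul_eq_mul]
  rcases eq_or_ne c 0 with rfl | hc
  · rw [mul_zero]
  suffices h : ℓ ∣ Fintype.card {x // f x = c} by
    rw [← Fintype.card_subtype, (CharP.cast_eq_zero_iff k ℓ _).2 h, zero_mul]
  by_contra hdvd
  obtain ⟨⟨x, hx⟩, hfix⟩ := Equiv.Perm.exists_fixed_point_of_prime (n := 1) hdvd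
    (σ := σ.subtypePerm fun x => by rw [hf])
    (by rw [pow_one, Equiv.Perm.subtypePerm_pow]; simp only [hσ]; rfl)
  exact hc (hx ▸ h0 x (congrArg Subtype.val hfix))

theorem cosetSum_eq_zero [Finite G] {ℓ : ℕ} [Fact ℓ.Prime] [Semiring k] [CharP k ℓ]
    (hf : IsDefectZeroClassFunction ℓ f) {g d : G} (hd1 : d ≠ 1) (hdl : d ^ ℓ = 1)
    (hd : ∀ u, d * u * d⁻¹ ∈ U ↔ u ∈ U) (hg : g⁻¹ * d * g * d⁻¹ ∈ U) : cosetSum U f g = 0 := by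
  have := Fintype.ofFinite {x // g⁻¹ * x ∈ U}
  have hsum : cosetSum U f g = ∑ x : {x // g⁻¹ * x ∈ U}, f x := by
    rw [← finsum_eq_sum_of_fintype]
    exact finsum_eq_of_bijective _ ((Equiv.mulLeft g).subtypeEquiv fun u => by simp).bijective
      fun _ => rfl
  let σ : Equiv.Perm G := MulAut.toPerm G (MulAut.conj d)
  have hσ : σ ^ ℓ = 1 := by rw [← map_pow, ← map_pow, hdl, map_one, map_one]
  have hmem (x : G) : g⁻¹ * σ x ∈ U ↔ g⁻¹ * x ∈ U := by
    have hσx : σ x = d * x * d⁻¹ := rfl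
    rw [hσx, show g⁻¹ * (d * x * d⁻¹) = g⁻¹ * d * g * d⁻¹ * (d * (g⁻¹ * x) * d⁻¹) by group,
      U.mul_mem_cancel_left hg, hd]
  rw [hsum]
  refine sum_eq_zero_of_perm (σ := σ.subtypePerm hmem) (ℓ := ℓ)
    (by rw [Equiv.Perm.subtypePerm_pow]; simp only [hσ]; rfl) (fun x => hf.conj _ _) fun x hx => ?_
  exact hf.eq_zero hd1 hdl (mul_inv_eq_iff_eq_mul.1 (congrArg Subtype.val hx))

variable [Finite G] [Semiring k] {B P : Subgroup G}

lemma cosetSum_eq_card_mul (hBP : B ≤ P) {g : G} (hB : ∀ b ∈ B, f (g * b) = f g)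
    (hP : ∀ p ∈ P, p ∉ B → f (g * p) = 0) : cosetSum P f g = Nat.card B * f g := by
  have := Fintype.ofFinite B
  have := Fintype.ofFinite P
  rw [cosetSum_eq_sum, Nat.card_eq_fintype_card, ← Finset.card_univ, ← nsmul_eq_mul,
    ← Finset.sum_const]
  refine (Fintype.sum_of_injective _ (Subgroup.inclusion_injective hBP) _ _ (fun p hp => ?_)
    fun b => (hB b b.2).symm).symm
  exact hP p p.2 fun hpB => hp ⟨⟨p, hpB⟩, rfl⟩

open scoped Classical in
lemma cosetSum_ite_inv_mul_mem (hBP : B ≤ P) (m g : G) :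
    cosetSum P (fun x => if m⁻¹ * x ∈ B then (1 : k) else 0) g =
      Nat.card B * if m⁻¹ * g ∈ P then 1 else 0 := by
  split_ifs with h
  · rw [← mul_inv_cancel_left m g, cosetSum_mul_right _ _ h,
      cosetSum_eq_card_mul hBP (by simp +contextual) (by simp +contextual)]
    simp
  · refine (finsum_eq_zero_of_forall_eq_zero fun p => if_neg fun hp => h ?_).trans
      (mul_zero _).symm
    rw [← mul_assoc] at hp
    exact (P.mul_mem_cancel_right p.2).1 (hBP hp)

end CosetSum

section CentralIdempotent

variable {K G V W : Type*} [Field K] [Group G]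
  [AddCommGroup V] [Module K V] [AddCommGroup W] [Module K W]
  (ρ : Representation K G V) (σ : Representation K G W)

lemma exists_asAlgebraHom_eq_algebraMap [FiniteDimensional K V] [IsAlgClosed K]
    [IsIrreducible ρ] {z : MonoidAlgebra K G}
    (hz : ∀ g h : G, z.coeff (h * g * h⁻¹) = z.coeff g) :
    ∃ c : K, ρ.asAlgebraHom z = algebraMap K (Module.End K V) c := by
  have hcenter : z ∈ Submonoid.center (MonoidAlgebra K G) :=
    Submonoid.mem_center_iff.2 fun x => (commute_of_coeff_conj hz x).symm.eq
  obtain ⟨c, hc⟩ := (IsIrreducible.algebraMap_intertwiningMap_bijective_of_isAlgClosed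
    (ρ := ρ)).2 (IntertwiningMap.centralAlgebraMul ρ hcenter)
  exact ⟨c, congrArg IntertwiningMap.toLinearMap hc.symm⟩

lemma finrank_cast_ne_zero [CharZero K] [FiniteDimensional K V] [IsIrreducible ρ] :
    (Module.finrank K V : K) ≠ 0 := by
  have : Nontrivial V := by
    by_contra h
    rw [not_nontrivial_iff_subsingleton] at h
    exact bot_ne_top (α := Subrepresentation ρ)
      (Subrepresentation.toSubmodule_injective (Subsingleton.elim _ _))
  exact_mod_cast Module.finrank_pos.ne'

lemma trace_asAlgebraHom [Fintype G] (x : MonoidAlgebra K G) :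
    LinearMap.trace K V (ρ.asAlgebraHom x) = ∑ g, x.coeff g * ρ.character g := by
  rw [asAlgebraHom_def, lift_apply, Finsupp.sum_fintype _ _ (by simp), map_sum]
  exact Finset.sum_congr rfl fun g _ => map_smul _ _ _

lemma asAlgebraHom_eq_algebraMap [Fintype G] [CharZero K] [FiniteDimensional K V]
    [IsAlgClosed K] [IsIrreducible ρ] {z : MonoidAlgebra K G}
    (hz : ∀ g h : G, z.coeff (h * g * h⁻¹) = z.coeff g) :
    ρ.asAlgebraHom z = algebraMap K (Module.End K V)
      ((∑ g, z.coeff g * ρ.character g) / Module.finrank K V) := by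
  obtain ⟨c, hc⟩ := exists_asAlgebraHom_eq_algebraMap ρ hz
  rw [← trace_asAlgebraHom, hc, Algebra.algebraMap_eq_smul_one, map_smul, LinearMap.trace_one,
    smul_eq_mul, mul_div_cancel_right₀ _ (finrank_cast_ne_zero ρ), Algebra.algebraMap_eq_smul_one]

variable [Finite G]

/-- The central idempotent `(χ(1) / |G|) ∑ χ(g⁻¹) g` of the group algebra attached to a
representation with character `χ`. -/
noncomputable def centralIdempotent : MonoidAlgebra K G :=
  ofCoeff (Finsupp.equivFunOnFinite.symm fun g =>
    (Module.finrank K V : K) / Nat.card G * ρ.character g⁻¹)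

@[simp]
lemma coeff_centralIdempotent (g : G) : (centralIdempotent ρ).coeff g =
    (Module.finrank K V : K) / Nat.card G * ρ.character g⁻¹ := rfl

lemma coeff_centralIdempotent_conj (g h : G) :
    (centralIdempotent ρ).coeff (h * g * h⁻¹) = (centralIdempotent ρ).coeff g := by
  have := ρ.char_conj g⁻¹ h
  simp only [coeff_centralIdempotent, _root_.mul_inv_rev, inv_inv, ← mul_assoc, this]

lemma coeff_mul_centralIdempotent (z : MonoidAlgebra K G) (g : G) :
    (z * centralIdempotent ρ).coeff g = (Module.finrank K V : K) / Nat.card G *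
      LinearMap.trace K V (ρ g⁻¹ * ρ.asAlgebraHom z) := by
  induction z using MonoidAlgebra.induction_linear with
  | zero => simp
  | add x y hx hy => simp [add_mul, mul_add, hx, hy]
  | single h r =>
    have : ρ.character (g⁻¹ * h) = LinearMap.trace K V (ρ g⁻¹ * ρ h) := by
      rw [← map_mul]; rfl
    simp [this, mul_left_comm]

variable [CharZero K] [FiniteDimensional K V] [FiniteDimensional K W]

lemma centralIdempotent_ne_zero [IsIrreducible ρ] : centralIdempotent ρ ≠ 0 := by
  intro h
  have hcoeff : (centralIdempotent ρ).coeff 1 = 0 := by rw [h]; rfl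
  have hG : (Nat.card G : K) ≠ 0 := by exact_mod_cast Nat.card_pos.ne'
  rw [coeff_centralIdempotent, inv_one, char_one] at hcoeff
  exact mul_ne_zero (div_ne_zero (finrank_cast_ne_zero ρ) hG) (finrank_cast_ne_zero ρ) hcoeff

variable [IsAlgClosed K] [IsIrreducible ρ] [IsIrreducible σ]

open scoped Classical in
lemma asAlgebraHom_centralIdempotent :
    ρ.asAlgebraHom (centralIdempotent σ) = algebraMap K (Module.End K V)
      ((Module.finrank K W : K) * (if Nonempty (σ.Equiv ρ) then 1 else 0) /
        Module.finrank K V) := by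
  have := Fintype.ofFinite G
  have hG : (Nat.card G : K) ≠ 0 := by exact_mod_cast Nat.card_pos.ne'
  let : Invertible (Nat.card G : K) := invertibleOfNonzero hG
  rw [asAlgebraHom_eq_algebraMap ρ (coeff_centralIdempotent_conj σ), ← char_orthonormal ρ σ,
    Finset.mul_sum, Finset.mul_sum]
  congr! 3 with g
  rw [coeff_centralIdempotent]
  ring

lemma isIdempotentElem_centralIdempotent : IsIdempotentElem (centralIdempotent ρ) := by
  ext g
  rw [coeff_mul_centralIdempotent, asAlgebraHom_centralIdempotent, if_pos ⟨.refl ρ⟩, mul_one,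
    div_self (finrank_cast_ne_zero ρ), map_one, mul_one]
  rfl

lemma centralIdempotent_mul_eq_zero (h : IsEmpty (σ.Equiv ρ)) :
    centralIdempotent σ * centralIdempotent ρ = 0 := by
  ext g
  rw [coeff_mul_centralIdempotent, asAlgebraHom_centralIdempotent, if_neg (not_nonempty_iff.2 h)]
  simp

end CentralIdempotent

section Integrality

lemma card_conjClasses_carrier_mul_card_centralizer {G : Type*} [Group G] (g : G) :
    Nat.card (ConjClasses.mk g).carrier * Nat.card (Subgroup.centralizer {g}) = Nat.card G := by
  rw [Subgroup.nat_card_centralizer_nat_card_stabilizer, ← ConjAct.orbit_eq_carrier_conjClasses]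
  have := (MulAction.stabilizer (ConjAct G) g).index_mul_card
  rwa [MulAction.index_stabilizer, Nat.card_congr ConjAct.ofConjAct.toEquiv] at this

variable {K G V : Type*} [Field K] [IsAlgClosed K] [CharZero K] [Group G] [Finite G]
  [AddCommGroup V] [Module K V] [FiniteDimensional K V]
  (ρ : Representation K G V) [IsIrreducible ρ]

lemma isIntegral_card_conjClass_mul_character_div_finrank (g : G) :
    IsIntegral ℤ ((Nat.card (ConjClasses.mk g).carrier : K) * ρ.character g /
      Module.finrank K V) := by
  classical
  have := Fintype.ofFinite G
  let y : MonoidAlgebra ℤ G :=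
    ofCoeff (Finsupp.equivFunOnFinite.symm fun x => if x ∈ (ConjClasses.mk g).carrier then 1 else 0)
  let z : MonoidAlgebra K G := mapRingHom G (algebraMap ℤ K) y
  have coeff_z : ∀ x, z.coeff x = if x ∈ (ConjClasses.mk g).carrier then 1 else 0 := fun x => by
    simp [z, y]
  have z_conj : ∀ x h : G, z.coeff (h * x * h⁻¹) = z.coeff x := fun x h => by
    have : ConjClasses.mk (h * x * h⁻¹) = ConjClasses.mk x :=
      ConjClasses.mk_eq_mk_iff_isConj.2 (isConj_iff.2 ⟨h, rfl⟩).symm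
    simp only [coeff_z, ConjClasses.mem_carrier_iff_mk_eq, this]
  have sum_eq : ∑ x, z.coeff x * ρ.character x =
      Nat.card (ConjClasses.mk g).carrier * ρ.character g := by
    rw [Nat.card_eq_fintype_card, ← Set.toFinset_card, ← nsmul_eq_mul, ← Finset.sum_const]
    simp only [coeff_z, ite_mul, one_mul, zero_mul, ← Finset.sum_filter]
    refine Finset.sum_congr (by ext; simp) fun x hx => ?_
    obtain ⟨c, rfl⟩ := isConj_iff.1 (ConjClasses.mk_eq_mk_iff_isConj.1
      (ConjClasses.mem_carrier_iff_mk_eq.1 (Set.mem_toFinset.1 hx))).symm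
    exact ρ.char_conj g c
  have integral_action : IsIntegral ℤ (ρ.asAlgebraHom z) := by
    rw [asAlgebraHom_def, lift_mapRingHom_algebraMap]
    exact (IsIntegral.of_finite ℤ y).map (lift ℤ (Module.End K V) G ρ)
  have : Nontrivial V := Module.nontrivial_of_finrank_pos (R := K)
    (Nat.pos_of_ne_zero (by exact_mod_cast finrank_cast_ne_zero ρ))
  rwa [asAlgebraHom_eq_algebraMap ρ z_conj, sum_eq, isIntegral_algebraMap_iff
    (FaithfulSMul.algebraMap_injective K (Module.End K V))] at integral_action

lemma exists_isIntegral_coeff_centralIdempotent_eq (g : G) :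
    ∃ w : K, IsIntegral ℤ w ∧ (centralIdempotent ρ).coeff g =
      ((Module.finrank K V : K) / Nat.card G) ^ 2 * Nat.card (Subgroup.centralizer {g⁻¹}) * w := by
  refine ⟨_, isIntegral_card_conjClass_mul_character_div_finrank ρ g⁻¹, ?_⟩
  have hV := finrank_cast_ne_zero ρ
  have hG : (Nat.card G : K) ≠ 0 := by exact_mod_cast Nat.card_pos.ne'
  have hcard : (Nat.card (ConjClasses.mk g⁻¹).carrier : K) *
      Nat.card (Subgroup.centralizer {g⁻¹}) = Nat.card G :=
    mod_cast card_conjClasses_carrier_mul_card_centralizer g⁻¹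
  rw [coeff_centralIdempotent]
  field_simp
  rw [← hcard]
  ring

end Integrality

section Reduction

open IsLocalRing

/- The coefficients of an idempotent generate an ideal `J` with `J ≤ J * J`, so Nakayama's lemma
applies as soon as they are all in the maximal ideal. -/
theorem map_residue_ne_zero_of_isIdempotentElem {R G : Type*} [CommRing R] [IsLocalRing R]
    [Monoid G] {e : MonoidAlgebra R G} (he : IsIdempotentElem e) (hne : e ≠ 0) :
    mapRingHom G (residue R) e ≠ 0 := by
  classical
  intro hzero
  let J : Ideal R := Ideal.span (e.coeff '' e.coeff.support)
  have coeff_mem : ∀ g, e.coeff g ∈ J := fun g => by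
    by_cases hg : e.coeff g = 0
    · rw [hg]; exact J.zero_mem
    · exact Ideal.subset_span ⟨g, Finsupp.mem_support_iff.2 hg, rfl⟩
  have J_le : J ≤ maximalIdeal R • J := by
    refine Ideal.span_le.2 ?_
    rintro _ ⟨g, -, rfl⟩
    rw [SetLike.mem_coe, ← he, coeff_mul]
    refine Ideal.sum_mem _ fun x _ => Ideal.sum_mem _ fun y _ => ?_
    dsimp only
    split_ifs
    · refine Ideal.mul_mem_mul ((residue_eq_zero_iff _).1 ?_) (coeff_mem y)
      rw [← coeff_mapRingHom, hzero]
      rfl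
    · exact Ideal.zero_mem _
  have J_eq : J = ⊥ := Submodule.eq_bot_of_le_smul_of_le_jacobson_bot _ J
    (Submodule.fg_span (Set.toFinite _)) J_le (jacobson_eq_maximalIdeal ⊥ bot_ne_top).ge
  refine hne ?_
  ext g
  exact (Submodule.mem_bot R).1 (J_eq ▸ coeff_mem g)

variable {K : Type*} [Field K]

theorem exists_valuationSubring_natCast_mem_nonunits [CharZero K] {ℓ : ℕ} (hℓ : ℓ.Prime) :
    ∃ O : ValuationSubring K, (ℓ : K) ∈ O.nonunits := by
  let A : Subring K := (Int.castRingHom K).range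
  let l : A := ⟨(ℓ : K), (ℓ : ℤ), by simp⟩
  have hI : Ideal.span {l} ≠ ⊤ := by
    rw [Ne, Ideal.span_singleton_eq_top]
    intro hunit
    obtain ⟨⟨_, m, rfl⟩, hm⟩ := isUnit_iff_exists_inv.1 hunit
    have hm' : (ℓ : K) * (m : K) = 1 := congrArg Subtype.val hm
    exact (Nat.prime_iff_prime_int.1 hℓ).not_isUnit (.of_mul_eq_one m (mod_cast hm'))
  obtain ⟨O, -, hO⟩ := Ideal.image_subset_nonunits_valuationSubring _ hI
  exact ⟨O, hO ⟨l, Ideal.subset_span rfl, rfl⟩⟩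

lemma mem_valuationSubring_of_isIntegral (O : ValuationSubring K) {x : K} (hx : IsIntegral ℤ x) :
    x ∈ O := by
  obtain ⟨y, rfl⟩ := (IsIntegrallyClosed.isIntegral_iff (R := O) (K := K)).1 hx.tower_top
  exact y.2

variable {ℓ : ℕ} [hℓ : Fact ℓ.Prime] (O : ValuationSubring K)

lemma charP_residueField (hO : (ℓ : K) ∈ O.nonunits) : CharP (ResidueField O) ℓ := by
  refine (CharP.charP_iff_prime_eq_zero hℓ.out).2 ?_
  rw [← map_natCast (residue O), residue_eq_zero_iff, ValuationSubring.valuation_lt_one_iff]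
  exact hO

lemma natCast_inv_mem_valuationSubring (hO : (ℓ : K) ∈ O.nonunits) {n : ℕ} (hn : ¬ ℓ ∣ n) :
    (n : K)⁻¹ ∈ O := by
  have := charP_residueField O hO
  have hunit : IsUnit (n : O) := by
    rw [← notMem_maximalIdeal, ← residue_eq_zero_iff, map_natCast]
    rwa [CharP.cast_eq_zero_iff _ ℓ]
  obtain ⟨m, hm⟩ := isUnit_iff_exists_inv.1 hunit
  have hm' : (n : K) * m = 1 := congrArg Subtype.val hm
  rw [inv_eq_of_mul_eq_one_right hm']
  exact m.2

lemma natCast_div_natCast_mem_valuationSubring [CharZero K] (hO : (ℓ : K) ∈ O.nonunits) {d n : ℕ}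
    (hn : n ≠ 0) (h : padicValNat ℓ d = padicValNat ℓ n) : (d : K) / n ∈ O := by
  have hndvd : ¬ ℓ ^ (padicValNat ℓ n + 1) ∣ n := pow_succ_padicValNat_not_dvd hn
  obtain ⟨n', hn'⟩ : ℓ ^ padicValNat ℓ n ∣ n := pow_padicValNat_dvd
  obtain ⟨d', hd'⟩ : ℓ ^ padicValNat ℓ n ∣ d := h ▸ pow_padicValNat_dvd
  generalize padicValNat ℓ n = v at hndvd hn' hd'
  subst hn' hd'
  have hn'dvd : ¬ ℓ ∣ n' := fun hdvd => hndvd (pow_succ ℓ v ▸ mul_dvd_mul_left _ hdvd)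
  have hpow : (ℓ : K) ^ v ≠ 0 := pow_ne_zero _ (mod_cast hℓ.out.ne_zero)
  push_cast
  rw [mul_div_mul_left _ _ hpow, div_eq_mul_inv]
  exact O.mul_mem _ _ (natCast_mem O d') (natCast_inv_mem_valuationSubring O hO hn'dvd)

end Reduction

section DefectZeroCharacters

open IsLocalRing

universe u

variable {K : Type u} {G V W : Type*} [Field K] [IsAlgClosed K] [CharZero K] [Group G] [Finite G]
  [AddCommGroup V] [Module K V] [FiniteDimensional K V]
  [AddCommGroup W] [Module K W] [FiniteDimensional K W]
  {ℓ : ℕ} [hℓ : Fact ℓ.Prime] (O : ValuationSubring K)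
  (ρ : Representation K G V) (σ : Representation K G W) [IsIrreducible ρ] [IsIrreducible σ]

lemma exists_coeff_centralIdempotent_eq_card_centralizer_mul (hO : (ℓ : K) ∈ O.nonunits)
    (hρ : padicValNat ℓ (Module.finrank K V) = padicValNat ℓ (Nat.card G)) (g : G) :
    ∃ w : O, (centralIdempotent ρ).coeff g = Nat.card (Subgroup.centralizer {g⁻¹}) * (w : K) := by
  obtain ⟨w, hw, hcoeff⟩ := exists_isIntegral_coeff_centralIdempotent_eq ρ g
  have hdiv := natCast_div_natCast_mem_valuationSubring O hO Nat.card_pos.ne' hρ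
  refine ⟨⟨_, O.mul_mem _ _ (pow_mem hdiv 2) (mem_valuationSubring_of_isIntegral O hw)⟩, ?_⟩
  rw [hcoeff]
  ring

theorem exists_map_subtype_eq_centralIdempotent (hO : (ℓ : K) ∈ O.nonunits)
    (hρ : padicValNat ℓ (Module.finrank K V) = padicValNat ℓ (Nat.card G)) :
    ∃ e : MonoidAlgebra O G, mapRingHom G O.subtype e = centralIdempotent ρ ∧
      IsDefectZeroClassFunction ℓ (mapRingHom G (residue O) e).coeff := by
  have := charP_residueField O hO
  choose w hw using exists_coeff_centralIdempotent_eq_card_centralizer_mul O ρ hO hρ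
  let e : MonoidAlgebra O G := ofCoeff (Finsupp.equivFunOnFinite.symm fun g =>
    (Nat.card (Subgroup.centralizer {g⁻¹}) : O) * w g)
  have coeff_e : ∀ g, e.coeff g = (Nat.card (Subgroup.centralizer {g⁻¹}) : O) * w g :=
    fun _ => rfl
  have coe_coeff_e : ∀ g, (e.coeff g : K) = (centralIdempotent ρ).coeff g := fun g => by
    rw [hw, coeff_e]
    push_cast
    rfl
  refine ⟨e, ?_, fun g h => ?_, fun g d hd hdℓ hcomm => ?_⟩
  · ext g
    exact (coeff_mapRingHom _ _ _).trans (coe_coeff_e g)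
  · rw [coeff_mapRingHom, coeff_mapRingHom]
    congr 1
    apply Subtype.ext
    rw [coe_coeff_e, coe_coeff_e, coeff_centralIdempotent_conj]
  · let d' : Subgroup.centralizer {g⁻¹} :=
      ⟨d, Subgroup.mem_centralizer_singleton_iff.2 hcomm.inv_right.eq⟩
    have hdvd : ℓ ∣ Nat.card (Subgroup.centralizer {g⁻¹}) := by
      have hd' : orderOf d' = ℓ := (Subgroup.orderOf_mk d d'.2).trans (orderOf_eq_prime hdℓ hd)
      exact hd' ▸ orderOf_dvd_natCard d'
    rw [coeff_mapRingHom, coeff_e, map_mul, map_natCast, (CharP.cast_eq_zero_iff _ ℓ _).2 hdvd,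
      zero_mul]

omit O

theorem nonempty_equiv_of_defect_zero {U : Subgroup G} (hU : IsPGroup ℓ U)
    (hprop : ∀ {k : Type u} [Field k] [CharP k ℓ] {f₁ f₂ : G → k},
      IsDefectZeroClassFunction ℓ f₁ → IsDefectZeroClassFunction ℓ f₂ →
      ∀ g g', cosetSum U f₁ g * cosetSum U f₂ g' = cosetSum U f₁ g' * cosetSum U f₂ g)
    (hρ : padicValNat ℓ (Module.finrank K V) = padicValNat ℓ (Nat.card G))
    (hσ : padicValNat ℓ (Module.finrank K W) = padicValNat ℓ (Nat.card G)) :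
    Nonempty (σ.Equiv ρ) := by
  by_contra hempty
  obtain ⟨O, hO⟩ := exists_valuationSubring_natCast_mem_nonunits (K := K) hℓ.out
  have := charP_residueField O hO
  obtain ⟨eρ, map_eρ, hdz_ρ⟩ := exists_map_subtype_eq_centralIdempotent O ρ hO hρ
  obtain ⟨eσ, map_eσ, hdz_σ⟩ := exists_map_subtype_eq_centralIdempotent O σ hO hσ
  have map_inj : Function.Injective (mapRingHom G O.subtype) :=
    MonoidAlgebra.map_injective O.subtype.toAddMonoidHom Subtype.val_injective
  have idem_ρ : IsIdempotentElem eρ := map_inj <| by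
    rw [map_mul, map_eρ, isIdempotentElem_centralIdempotent ρ]
  have idem_σ : IsIdempotentElem eσ := map_inj <| by
    rw [map_mul, map_eσ, isIdempotentElem_centralIdempotent σ]
  have ne_ρ : eρ ≠ 0 := fun h => centralIdempotent_ne_zero ρ (by rw [← map_eρ, h, map_zero])
  have ne_σ : eσ ≠ 0 := fun h => centralIdempotent_ne_zero σ (by rw [← map_eσ, h, map_zero])
  have mul_eq_zero : eσ * eρ = 0 := map_inj <| by
    rw [map_mul, map_eσ, map_eρ, map_zero,
      centralIdempotent_mul_eq_zero ρ σ (not_nonempty_iff.1 hempty)]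
  refine mul_ne_zero_of_cosetSum_proportional hU hdz_σ hdz_ρ (hprop hdz_σ hdz_ρ)
    (idem_σ.map _) (idem_ρ.map _) (map_residue_ne_zero_of_isIdempotentElem idem_σ ne_σ)
    (map_residue_ne_zero_of_isIdempotentElem idem_ρ ne_ρ) ?_
  rw [← map_mul, mul_eq_zero, map_zero]

end DefectZeroCharacters

section FDRep

universe u

open CategoryTheory

theorem simple_iff_isIrreducible {k G : Type u} [Field k] [IsAlgClosed k] [Group G]
    [Finite G] [NeZero (Nat.card G : k)] (V : FDRep k G) : Simple V ↔ IsIrreducible V.ρ := by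
  constructor
  · intro hV
    have : Nontrivial V := by
      by_contra h
      rw [not_nontrivial_iff_subsingleton] at h
      exact id_nonzero V (by ext; exact Subsingleton.elim (α := V) _ _)
    refine { exists_pair_ne := ⟨⊥, ⊤, ?_⟩, eq_bot_or_eq_top := fun σ => ?_ }
    · exact fun h => bot_ne_top (congrArg Subrepresentation.toSubmodule h)
    let ι : FDRep.of σ.toRepresentation ⟶ V := FDRep.forget₂HomLinearEquiv _ _
      (Rep.ofHom ⟨σ.toSubmodule.subtype, fun _ => rfl⟩)
    have : Mono ι := ConcreteCategory.mono_of_injective ι Subtype.val_injective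
    refine or_iff_not_imp_left.2 fun hσ => ?_
    have : IsIso ι := isIso_of_mono_of_nonzero fun hι => hσ ?_
    · have hsurj : Function.Surjective ι := (ConcreteCategory.bijective_of_isIso ι).2
      refine Subrepresentation.toSubmodule_injective (eq_top_iff.2 fun v _ => ?_)
      obtain ⟨w, rfl⟩ := hsurj v
      exact w.2
    · refine Subrepresentation.toSubmodule_injective (eq_bot_iff.2 fun v hv => ?_)
      have : ι ⟨v, hv⟩ = 0 := by rw [hι]; rfl
      exact this
  · intro hV
    rw [FDRep.simple_iff_end_is_rank_one,
      ← (FDRep.forget₂HomLinearEquiv V V).finrank_eq, (Rep.homLinearEquiv _ _).finrank_eq]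
    exact IsIrreducible.finrank_intertwiningMap_self V.ρ

end FDRep

end DefectZero

namespace SpSteinberg

section Basics

variable {a : ℕ} {F : Type*} [Field F]

/-- The index set of the matrices in `Sp a F`; `Sum.swap` is the duality between the vectors
`eᵢ = inl i` and `fᵢ = inr i` of the standard symplectic basis. -/
abbrev Index (a : ℕ) := Fin a ⊕ Fin a

/-- The symplectic group of rank `a` over `F`. -/
abbrev Sp (a : ℕ) (F : Type*) [Field F] := symplecticGroup (Fin a) F

lemma swap_ne (p : Index a) : p.swap ≠ p := by cases p <;> simp

/-- The sign of a basis vector in the form `J`: `1` on the `eᵢ` and `-1` on the `fᵢ`. -/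
def sign (F : Type*) [Field F] : Index a → F
  | .inl _ => 1
  | .inr _ => -1

@[simp] lemma sign_inl (i : Fin a) : sign F (.inl i : Index a) = 1 := rfl

@[simp] lemma sign_inr (i : Fin a) : sign F (.inr i : Index a) = -1 := rfl

lemma sign_mul_self (p : Index a) : sign F p * sign F p = 1 := by cases p <;> simp

lemma sign_ne_zero (p : Index a) : sign F p ≠ 0 := by cases p <;> simp

@[simp] lemma sign_swap (p : Index a) : sign F p.swap = -sign F p := by
  cases p <;> simp

lemma J_apply (p q : Index a) : J (Fin a) F p q = if q = p.swap then -sign F p else 0 := by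
  rcases p with i | i <;> rcases q with j | j <;>
    simp [J, Matrix.one_apply, eq_comm, apply_ite (Neg.neg : F → F)]

lemma J_mul_apply {m : Type*} (M : Matrix (Index a) m F) (p : Index a) (q : m) :
    (J (Fin a) F * M) p q = -sign F p * M p.swap q := by
  simp [Matrix.mul_apply, J_apply]

lemma mul_J_apply (M : Matrix (Index a) (Index a) F) (p q : Index a) :
    (M * J (Fin a) F) p q = sign F q * M p q.swap := by
  rw [Matrix.mul_apply, Finset.sum_eq_single q.swap]
  · simp [J_apply, mul_comm]
  · intro r _ hr
    rw [J_apply, if_neg, mul_zero]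
    rintro rfl
    simp at hr
  · simp

lemma inv_apply (g : Sp a F) (p q : Index a) :
    (g⁻¹).1 p q = sign F p * sign F q * g.1 q.swap p.swap := by
  rw [SymplecticGroup.coe_inv, Matrix.mul_assoc, Matrix.neg_mul, Matrix.neg_apply, J_mul_apply,
    mul_J_apply, transpose_apply]
  ring

lemma inv_apply_eq_zero_iff (g : Sp a F) (p q : Index a) :
    (g⁻¹).1 p q = 0 ↔ g.1 q.swap p.swap = 0 := by
  simp [inv_apply, sign_ne_zero]

lemma coe_mul_coe_inv (g : Sp a F) : g.1 * (g⁻¹).1 = 1 := congrArg Subtype.val (mul_inv_cancel g)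

lemma coe_inv_mul_coe (g : Sp a F) : (g⁻¹).1 * g.1 = 1 := congrArg Subtype.val (inv_mul_cancel g)

end Basics

section StrictBlockTriangular

variable {m R α : Type*} [LinearOrder α] {b : m → α}

/-- Matrices that vanish on and below the block diagonal defined by `b`. -/
def StrictBlockTriangular [Zero R] (M : Matrix m m R) (b : m → α) : Prop :=
  ∀ ⦃i j⦄, b j ≤ b i → M i j = 0

lemma StrictBlockTriangular.blockTriangular [Zero R] {M : Matrix m m R}
    (hM : StrictBlockTriangular M b) : M.BlockTriangular b := fun _ _ h => hM h.le

variable [NonUnitalRing R] {M N : Matrix m m R}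

lemma StrictBlockTriangular.add (hM : StrictBlockTriangular M b) (hN : StrictBlockTriangular N b) :
    StrictBlockTriangular (M + N) b := fun i j h => by
  rw [Matrix.add_apply, hM h, hN h, add_zero]

lemma StrictBlockTriangular.neg (hM : StrictBlockTriangular M b) :
    StrictBlockTriangular (-M) b := fun i j h => by rw [Matrix.neg_apply, hM h, neg_zero]

variable [Fintype m]

lemma StrictBlockTriangular.mul_blockTriangular (hM : StrictBlockTriangular M b)
    (hN : N.BlockTriangular b) : StrictBlockTriangular (M * N) b := fun i j h => by
  rw [Matrix.mul_apply]
  refine Finset.sum_eq_zero fun r _ => ?_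
  rcases le_or_gt (b r) (b i) with hr | hr
  · rw [hM hr, zero_mul]
  · rw [hN (h.trans_lt hr), mul_zero]

lemma StrictBlockTriangular.blockTriangular_mul (hN : StrictBlockTriangular N b)
    (hM : M.BlockTriangular b) : StrictBlockTriangular (M * N) b := fun i j h => by
  rw [Matrix.mul_apply]
  refine Finset.sum_eq_zero fun r _ => ?_
  rcases lt_or_ge (b r) (b i) with hr | hr
  · rw [hM hr, zero_mul]
  · rw [hN (h.trans hr), mul_zero]

end StrictBlockTriangular

section Parabolic

variable {a : ℕ} {F : Type*} [Field F]

/-- A coweight of `Sp a F`: an integer-valued function on the basis vectors that is odd under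
duality. It grades the matrix entries and thereby defines a parabolic subgroup. -/
structure Weight (a : ℕ) where
  /-- The value of the weight at a basis vector. -/
  toFun : Index a → ℤ
  map_swap' : ∀ p, toFun p.swap = -toFun p

instance : CoeFun (Weight a) fun _ => Index a → ℤ := ⟨Weight.toFun⟩

lemma Weight.map_swap (τ : Weight a) (p : Index a) : τ p.swap = -τ p := τ.map_swap' p

lemma blockTriangular_inv {τ : Weight a} {g : Sp a F} (hg : g.1.BlockTriangular τ) :
    (g⁻¹).1.BlockTriangular τ := fun p q h =>
  (inv_apply_eq_zero_iff g p q).2 <| hg <| by rw [τ.map_swap, τ.map_swap]; omega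

lemma blockTriangular_of_sub_one {τ : Weight a} {M : Matrix (Index a) (Index a) F}
    (h : StrictBlockTriangular (M - 1) τ) : M.BlockTriangular τ := by
  simpa using h.blockTriangular.add blockTriangular_one

/-- The parabolic subgroup of `Sp a F` of block upper triangular matrices for a weight. -/
def parabolic (F : Type*) [Field F] (τ : Weight a) : Subgroup (Sp a F) where
  carrier := {g | g.1.BlockTriangular τ}
  mul_mem' := fun hg hh => hg.mul hh
  one_mem' := blockTriangular_one
  inv_mem' := blockTriangular_inv

/-- The unipotent radical of `parabolic F τ`: its elements are block unitriangular. -/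
def radical (F : Type*) [Field F] (τ : Weight a) : Subgroup (Sp a F) where
  carrier := {g | StrictBlockTriangular (g.1 - 1) τ}
  mul_mem' := fun {g h} hg hh => by
    have key : (g * h).1 - 1 = (g.1 - 1) * h.1 + (h.1 - 1) := by
      rw [Submonoid.coe_mul]; noncomm_ring
    rw [Set.mem_ofPred_eq, key]
    exact (hg.mul_blockTriangular (blockTriangular_of_sub_one hh)).add hh
  one_mem' := fun _ _ _ => by simp
  inv_mem' := fun {g} hg => by
    have key : (g⁻¹).1 - 1 = (g⁻¹).1 * -(g.1 - 1) := by
      rw [mul_neg, mul_sub, coe_inv_mul_coe]; simp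
    rw [Set.mem_ofPred_eq, key]
    exact hg.neg.blockTriangular_mul (blockTriangular_inv (blockTriangular_of_sub_one hg))

lemma mem_radical {τ : Weight a} {g : Sp a F} :
    g ∈ radical F τ ↔ StrictBlockTriangular (g.1 - 1) τ := Iff.rfl

lemma radical_le_parabolic (τ : Weight a) : radical F τ ≤ parabolic F τ :=
  fun _ => blockTriangular_of_sub_one

lemma conj_mem_radical {τ : Weight a} {g u : Sp a F} (hg : g ∈ parabolic F τ)
    (hu : u ∈ radical F τ) : g * u * g⁻¹ ∈ radical F τ := by
  have key : (g * u * g⁻¹).1 - 1 = g.1 * (u.1 - 1) * (g⁻¹).1 := by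
    rw [mul_sub, sub_mul, mul_one, coe_mul_coe_inv]; rfl
  rw [mem_radical, key]
  exact (StrictBlockTriangular.blockTriangular_mul hu hg).mul_blockTriangular
    (blockTriangular_inv hg)

lemma conj_mem_radical_iff {τ : Weight a} {g : Sp a F} (hg : g ∈ parabolic F τ) (u : Sp a F) :
    g * u * g⁻¹ ∈ radical F τ ↔ u ∈ radical F τ := by
  refine ⟨fun h => ?_, conj_mem_radical hg⟩
  simpa [mul_assoc] using conj_mem_radical (inv_mem hg) h

end Parabolic

section Borel

variable {a : ℕ} {F : Type*} [Field F]

/-- The regular weight, increasing along `e₀, …, eₐ₋₁, fₐ₋₁, …, f₀`. -/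
def height : Weight a where
  toFun
    | .inl i => (i : ℤ) - a
    | .inr i => a - (i : ℤ)
  map_swap' p := by cases p <;> simp

@[simp] lemma height_inl (i : Fin a) : height (.inl i) = (i : ℤ) - a := rfl

@[simp] lemma height_inr (i : Fin a) : height (.inr i) = (a : ℤ) - i := rfl

lemma height_injective : Function.Injective (height : Index a → ℤ) := by
  rintro (i | i) (j | j) h <;> simp at h
  · congr 1; omega
  · omega
  · omega
  · congr 1; omega

/-- The standard Borel subgroup of `Sp a F`. -/
abbrev borel (a : ℕ) (F : Type*) [Field F] : Subgroup (Sp a F) := parabolic F height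

/-- The unipotent radical of the standard Borel subgroup of `Sp a F`. -/
abbrev unipotent (a : ℕ) (F : Type*) [Field F] : Subgroup (Sp a F) := radical F height

lemma mul_apply_self_of_mem_borel {g h : Sp a F} (hg : g ∈ borel a F) (hh : h ∈ borel a F)
    (p : Index a) : (g * h).1 p p = g.1 p p * h.1 p p := by
  rw [Submonoid.coe_mul, Matrix.mul_apply, Finset.sum_eq_single p]
  · intro r _ hr
    rcases (height_injective.ne hr).lt_or_gt with h' | h'
    · rw [hg h', zero_mul]
    · rw [hh h', mul_zero]
  · simp

lemma apply_self_ne_zero_of_mem_borel {g : Sp a F} (hg : g ∈ borel a F) (p : Index a) :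
    g.1 p p ≠ 0 := by
  have h := mul_apply_self_of_mem_borel hg (inv_mem hg) p
  rw [mul_inv_cancel, OneMemClass.coe_one, Matrix.one_apply_eq] at h
  exact left_ne_zero_of_mul (h ▸ one_ne_zero)

lemma mem_unipotent_iff {g : Sp a F} :
    g ∈ unipotent a F ↔ g ∈ borel a F ∧ ∀ p, g.1 p p = 1 := by
  refine ⟨fun h => ⟨radical_le_parabolic _ h, fun p => ?_⟩, fun ⟨hg, hdiag⟩ p q h => ?_⟩
  · have hp := h (le_refl (height p))
    rwa [Matrix.sub_apply, Matrix.one_apply_eq, sub_eq_zero] at hp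
  · rcases h.lt_or_eq with hlt | heq
    · rw [Matrix.sub_apply, hg hlt, Matrix.one_apply_ne, sub_zero]
      rintro rfl
      exact lt_irrefl _ hlt
    · obtain rfl := height_injective heq
      simp [hdiag]

end Borel

section MinimalParabolic

variable {a : ℕ} {F : Type*} [Field F]

/-- The successor of `eᵢ` in the ordering by `height`: `eᵢ₊₁`, or `fᵢ` when `i` is the last
index. The pair `eᵢ`, `next i` spans the `i`-th simple root. -/
def next (i : Fin a) : Index a := if h : (i : ℕ) + 1 < a then .inl ⟨i + 1, h⟩ else .inr i

lemma next_of_lt {i : Fin a} (hi : (i : ℕ) + 1 < a) : next i = .inl ⟨i + 1, hi⟩ := dif_pos hi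

lemma next_of_not_lt {i : Fin a} (hi : ¬(i : ℕ) + 1 < a) : next i = .inr i := dif_neg hi

lemma height_lt_next (i : Fin a) : height (.inl i) < height (next i) := by
  have := i.2
  unfold next
  split_ifs <;> simp
  omega

lemma inl_ne_next (i : Fin a) : Sum.inl i ≠ next i :=
  fun h => (height_lt_next i).ne (congrArg height h)

lemma next_ne_inl (i : Fin a) : next i ≠ .inl i := (inl_ne_next i).symm

/-- The weight obtained from `height` by raising `eᵢ` by one and, dually, lowering `fᵢ` by one,
which puts `eᵢ` and `next i` at the same level. -/
def minWeight (i : Fin a) : Weight a where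
  toFun p := if p = .inl i then -((a : ℤ) - i - 1) else
    if p = .inr i then (a : ℤ) - i - 1 else height p
  map_swap' p := by rcases p with j | j <;> by_cases h : j = i <;> simp [h]

lemma minWeight_apply (i : Fin a) (p : Index a) : minWeight i p =
    if p = .inl i then -((a : ℤ) - i - 1) else
      if p = .inr i then (a : ℤ) - i - 1 else height p := rfl

lemma minWeight_le_minWeight (i : Fin a) {p q : Index a} (h : height p ≤ height q) :
    minWeight i p ≤ minWeight i q := by
  have := i.2
  rcases p with j | j <;> rcases q with k | k <;>
    simp only [minWeight_apply, height_inl, height_inr, Sum.inl.injEq, Sum.inr.injEq,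
      reduceCtorEq, if_false, Fin.ext_iff] at h ⊢ <;>
    split_ifs <;> omega

lemma height_lt_of_minWeight_lt (i : Fin a) {p q : Index a}
    (h : minWeight i p < minWeight i q) : height p < height q :=
  not_le.1 fun hle => (minWeight_le_minWeight i hle).not_gt h

lemma eq_next_or_eq_inr_of_minWeight_le (i : Fin a) {p q : Index a} (h : height q < height p)
    (hmin : minWeight i p ≤ minWeight i q) :
    p = next i ∧ q = .inl i ∨ p = .inr i ∧ q = (next i).swap := by
  have := i.2
  by_cases hi : (i : ℕ) + 1 < a <;> rcases p with j | j <;> rcases q with k | k <;>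
    simp only [next, hi, dite_true, dite_false, minWeight_apply, height_inl, height_inr,
      Sum.inl.injEq, Sum.inr.injEq, reduceCtorEq, if_false, Sum.swap_inl, Sum.swap_inr,
      Fin.ext_iff] at h hmin ⊢ <;>
    split_ifs at hmin <;> omega

/-- The two indices of the `i`-th simple root. -/
def pair (i : Fin a) : Fin 2 → Index a := ![.inl i, next i]

@[simp] lemma pair_zero (i : Fin a) : pair i 0 = .inl i := rfl

@[simp] lemma pair_one (i : Fin a) : pair i 1 = next i := rfl

lemma pair_injective (i : Fin a) : Function.Injective (pair i) := by
  intro k l h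
  fin_cases k <;> fin_cases l <;> simp [inl_ne_next, next_ne_inl] at h ⊢

lemma minWeight_eq_iff (i : Fin a) {p : Index a} :
    minWeight i p = minWeight i (.inl i) ↔ p = .inl i ∨ p = next i := by
  have := i.2
  by_cases hi : (i : ℕ) + 1 < a <;> rcases p with j | j <;>
    simp only [next, hi, dite_true, dite_false, minWeight_apply, height_inl, height_inr,
      Sum.inl.injEq, Sum.inr.injEq, reduceCtorEq, if_false, Fin.ext_iff, if_true, false_or,
      or_false, iff_false] <;>
    have := j.2 <;> split_ifs <;> omega

lemma minWeight_pair (i : Fin a) (k : Fin 2) : minWeight i (pair i k) = minWeight i (.inl i) := by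
  rw [minWeight_eq_iff]
  fin_cases k <;> simp

/-- The `i`-th minimal parabolic subgroup. -/
abbrev minParabolic (F : Type*) [Field F] (i : Fin a) : Subgroup (Sp a F) :=
  parabolic F (minWeight i)

/-- The unipotent radical of the `i`-th minimal parabolic subgroup. -/
abbrev minRadical (F : Type*) [Field F] (i : Fin a) : Subgroup (Sp a F) := radical F (minWeight i)

lemma borel_le_minParabolic (i : Fin a) : borel a F ≤ minParabolic F i :=
  fun _ hg _ _ h => hg (height_lt_of_minWeight_lt i h)

lemma minRadical_le_unipotent (i : Fin a) : minRadical F i ≤ unipotent a F :=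
  fun _ hg _ _ h => hg (minWeight_le_minWeight i h)

/-- The diagonal block of a matrix at the `i`-th simple root. -/
def leviBlock (i : Fin a) (M : Matrix (Index a) (Index a) F) : Matrix (Fin 2) (Fin 2) F :=
  M.submatrix (pair i) (pair i)

lemma leviBlock_mul (i : Fin a) {M N : Matrix (Index a) (Index a) F}
    (hM : M.BlockTriangular (minWeight i)) (hN : N.BlockTriangular (minWeight i)) :
    leviBlock i (M * N) = leviBlock i M * leviBlock i N := by
  ext k l
  have hsub : Finset.univ.image (pair i) ⊆ Finset.univ := Finset.subset_univ _
  simp only [leviBlock, submatrix_apply, Matrix.mul_apply]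
  rw [← Finset.sum_subset hsub, Finset.sum_image fun _ _ _ _ h => pair_injective i h]
  intro r _ hr
  have hne : minWeight i r ≠ minWeight i (.inl i) := by
    rw [Ne, minWeight_eq_iff]
    rintro (rfl | rfl)
    · exact hr (Finset.mem_image_of_mem (pair i) (Finset.mem_univ 0))
    · exact hr (Finset.mem_image_of_mem (pair i) (Finset.mem_univ 1))
  rcases hne.lt_or_gt with h | h
  · rw [hM (by rwa [minWeight_pair]), zero_mul]
  · rw [hN (by rwa [minWeight_pair]), mul_zero]

lemma leviBlock_one (i : Fin a) : leviBlock i (1 : Matrix (Index a) (Index a) F) = 1 :=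
  submatrix_one _ (pair_injective i)

lemma leviBlock_mul_leviBlock_inv (i : Fin a) {g : Sp a F} (hg : g ∈ minParabolic F i) :
    leviBlock i g.1 * leviBlock i (g⁻¹).1 = 1 := by
  rw [← leviBlock_mul i hg (inv_mem hg), coe_mul_coe_inv, leviBlock_one]

/- The entry dual to `(next i, eᵢ)` is, up to sign, that entry of the inverse matrix. -/
theorem mem_borel_iff_of_mem_minParabolic {i : Fin a} {g : Sp a F} (hg : g ∈ minParabolic F i) :
    g ∈ borel a F ↔ g.1 (next i) (.inl i) = 0 := by
  refine ⟨fun h => h (height_lt_next i), fun h0 => ?_⟩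
  have hblock := leviBlock_mul_leviBlock_inv i hg
  have h10 := congrFun (congrFun hblock 1) 0
  have h11 := congrFun (congrFun hblock 1) 1
  simp only [leviBlock, Matrix.mul_apply, Fin.sum_univ_two, submatrix_apply, pair_zero, pair_one,
    h0, zero_mul, zero_add, Matrix.one_apply_eq, Matrix.one_apply_ne one_ne_zero] at h10 h11
  have hdual : g.1 (.inr i) (next i).swap = 0 := by
    refine (inv_apply_eq_zero_iff g (next i) (.inl i)).1 ?_
    exact (mul_eq_zero.1 h10).resolve_left (left_ne_zero_of_mul (h11 ▸ one_ne_zero))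
  intro p q h
  rcases lt_or_ge (minWeight i q) (minWeight i p) with hlt | hle
  · exact hg hlt
  · rcases eq_next_or_eq_inr_of_minWeight_le i h hle with ⟨rfl, rfl⟩ | ⟨rfl, rfl⟩
    exacts [h0, hdual]

theorem mem_minRadical_of_mem_unipotent {i : Fin a} {g : Sp a F} (hg : g ∈ unipotent a F)
    (h0 : g.1 (.inl i) (next i) = 0) : g ∈ minRadical F i := by
  obtain ⟨hB, hdiag⟩ := mem_unipotent_iff.1 hg
  have hblock : leviBlock i g.1 = 1 := by
    ext k l
    fin_cases k <;> fin_cases l <;> simp [leviBlock, h0, hdiag, hB (height_lt_next i)]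
  have hinv := leviBlock_mul_leviBlock_inv i (borel_le_minParabolic i hB)
  rw [hblock, Matrix.one_mul] at hinv
  have hdual : g.1 (next i).swap (.inr i) = 0 :=
    (inv_apply_eq_zero_iff g (.inl i) (next i)).1 (congrFun (congrFun hinv 0) 1)
  intro p q h
  rcases le_or_gt (height q) (height p) with hle | hlt
  · exact hg hle
  · have hne : p ≠ q := fun hpq => hlt.ne (congrArg height hpq)
    rw [Matrix.sub_apply, Matrix.one_apply_ne hne, sub_zero]
    rcases eq_next_or_eq_inr_of_minWeight_le i hlt h with ⟨rfl, rfl⟩ | ⟨rfl, rfl⟩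
    exacts [h0, hdual]

end MinimalParabolic

section Embed

variable {m n R α : Type*} [DecidableEq n] [Fintype m] [DecidableEq m] [CommRing R]
  {p q : m → n} {A B : Matrix m m R}

/-- The inclusion of coordinates along `p : m → n`, as a matrix. -/
def incl (R : Type*) [CommRing R] (p : m → n) : Matrix n m R := (1 : Matrix n n R).submatrix id p

omit [Fintype m] [DecidableEq m] in
lemma incl_apply_of_ne {x : n} {k : m} (h : x ≠ p k) : incl R p x k = 0 := Matrix.one_apply_ne h

/-- For injective `p`, the matrix acting as `A` on the coordinates in the range of `p` and
trivially on the others. -/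
def embed (p : m → n) (A : Matrix m m R) : Matrix n n R := 1 + incl R p * (A - 1) * (incl R p)ᵀ

lemma embed_one (p : m → n) : embed p (1 : Matrix m m R) = 1 := by simp [embed]

lemma embed_transpose (p : m → n) (A : Matrix m m R) : (embed p A)ᵀ = embed p Aᵀ := by
  simp [embed, Matrix.mul_assoc]

lemma embed_comp_equiv (p : m → n) (e : Equiv.Perm m) (A : Matrix m m R) :
    embed (p ∘ e) (A.submatrix e e) = embed p A := by
  have hincl : incl R (p ∘ e) = (incl R p).submatrix id e := rfl
  have hsub : A.submatrix e e - 1 = (A - 1).submatrix e e := by simp [submatrix_sub]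
  rw [embed, hincl, transpose_submatrix, hsub, submatrix_mul_equiv, submatrix_mul_equiv,
    submatrix_id_id, embed]

lemma embed_apply_eq_one_apply {x y : n}
    (h : ∀ k l, p k = x → p l = y → A k l = (1 : Matrix m m R) k l) :
    embed p A x y = (1 : Matrix n n R) x y := by
  rw [embed, Matrix.add_apply, add_eq_left, Matrix.mul_apply]
  refine Finset.sum_eq_zero fun l _ => ?_
  rw [Matrix.mul_apply, Finset.sum_mul]
  refine Finset.sum_eq_zero fun k _ => ?_
  by_cases hkl : x = p k ∧ p l = y
  · rw [Matrix.sub_apply, h k l hkl.1.symm hkl.2, sub_self, mul_zero, zero_mul]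
  · rcases not_and_or.1 hkl with hk | hl
    · rw [incl_apply_of_ne hk, zero_mul, zero_mul]
    · rw [transpose_apply, incl_apply_of_ne (Ne.symm hl), mul_zero]

lemma embed_blockTriangular [LinearOrder α] {b : n → α} (h : A.BlockTriangular (b ∘ p)) :
    (embed p A).BlockTriangular b := fun x y hxy => by
  rw [embed_apply_eq_one_apply, blockTriangular_one hxy]
  rintro k l rfl rfl
  rw [h hxy, blockTriangular_one (b := b ∘ p) hxy]

lemma embed_sub_one_strictBlockTriangular [LinearOrder α] {b : n → α}
    (h : StrictBlockTriangular (A - 1) (b ∘ p)) : StrictBlockTriangular (embed p A - 1) b :=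
  fun x y hxy => by
    rw [Matrix.sub_apply, embed_apply_eq_one_apply, sub_self]
    rintro k l rfl rfl
    exact sub_eq_zero.1 (h hxy)

variable [Fintype n]

omit [Fintype m] [DecidableEq m] in
lemma incl_transpose_mul {l : Type*} (p : m → n) (M : Matrix n l R) :
    (incl R p)ᵀ * M = M.submatrix p id := by
  simpa [incl] using one_submatrix_mul p (Equiv.refl n) M

omit [Fintype m] in
lemma incl_transpose_mul_incl (hp : Function.Injective p) : (incl R p)ᵀ * incl R p = 1 := by
  rw [incl_transpose_mul, incl, submatrix_submatrix]
  exact submatrix_one _ hp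

omit [Fintype m] [DecidableEq m] in
lemma incl_transpose_mul_incl_of_disjoint (h : ∀ k l, p k ≠ q l) :
    (incl R p)ᵀ * incl R q = 0 := by
  rw [incl_transpose_mul]
  ext k l
  exact incl_apply_of_ne (h k l)

lemma incl_transpose_mul_embed (hp : Function.Injective p) (A : Matrix m m R) :
    (incl R p)ᵀ * embed p A = A * (incl R p)ᵀ := by
  rw [embed, Matrix.mul_add, ← Matrix.mul_assoc, ← Matrix.mul_assoc, incl_transpose_mul_incl hp]
  simp [Matrix.sub_mul]

lemma incl_transpose_mul_embed_of_disjoint (h : ∀ k l, p k ≠ q l) (B : Matrix m m R) :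
    (incl R p)ᵀ * embed q B = (incl R p)ᵀ := by
  rw [embed, Matrix.mul_add, ← Matrix.mul_assoc, ← Matrix.mul_assoc,
    incl_transpose_mul_incl_of_disjoint h]
  simp

lemma embed_mul (hp : Function.Injective p) (A B : Matrix m m R) :
    embed p A * embed p B = embed p (A * B) := by
  conv_lhs => rw [embed, add_mul, Matrix.mul_assoc _ _ (embed p B), incl_transpose_mul_embed hp,
    embed, Matrix.one_mul, add_assoc, ← Matrix.mul_assoc, ← Matrix.add_mul, Matrix.mul_assoc,
    ← Matrix.mul_add]
  rw [embed, sub_mul, one_mul, add_comm (B - 1), sub_add_sub_cancel]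

lemma commute_embed {D : Matrix n n R} (h₁ : D * incl R p = incl R p)
    (h₂ : (incl R p)ᵀ * D = (incl R p)ᵀ) (A : Matrix m m R) : Commute D (embed p A) := by
  rw [Commute, SemiconjBy, embed, mul_add, add_mul, ← Matrix.mul_assoc, ← Matrix.mul_assoc, h₁,
    Matrix.mul_assoc _ _ D, h₂, mul_one, one_mul]

lemma commute_embed_of_disjoint (h : ∀ k l, p k ≠ q l) (A B : Matrix m m R) :
    Commute (embed p A) (embed q B) := by
  refine commute_embed ?_ (incl_transpose_mul_embed_of_disjoint (fun k l => (h l k).symm) A) B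
  rw [← transpose_inj, transpose_mul, embed_transpose]
  exact incl_transpose_mul_embed_of_disjoint (fun k l => (h l k).symm) _

lemma commute_diagonal_embed {D : n → R} (hD : ∀ k, D (p k) = 1) (A : Matrix m m R) :
    Commute (diagonal D) (embed p A) := by
  have h : diagonal D * incl R p = incl R p := by
    ext x k
    rcases eq_or_ne x (p k) with rfl | hx <;> simp [diagonal_mul, incl_apply_of_ne, *]
  refine commute_embed h ?_ A
  rw [← transpose_inj, transpose_mul, diagonal_transpose]
  exact h

omit [Fintype n] in
lemma embed_diagonal [Finite n] (hp : Function.Injective p) {D : n → R}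
    (hD : ∀ x ∉ Set.range p, D x = 1) : embed p (diagonal (D ∘ p)) = diagonal D := by
  have := Fintype.ofFinite n
  ext x y
  by_cases hx : x ∈ Set.range p
  · obtain ⟨k, rfl⟩ := hx
    have hk := congrFun (congrFun (incl_transpose_mul_embed hp (diagonal (D ∘ p))) k) y
    rw [incl_transpose_mul, diagonal_mul] at hk
    refine hk.trans ?_
    rcases eq_or_ne y (p k) with rfl | hy
    · simp [incl, Matrix.one_apply]
    · simp [incl_apply_of_ne hy, diagonal_apply_ne _ hy.symm]
  · rw [embed_apply_eq_one_apply fun k _ hk => (hx ⟨k, hk⟩).elim]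
    rcases eq_or_ne x y with rfl | hxy <;> simp [*]

end Embed

section EmbedSymplectic

variable {a : ℕ} {F : Type*} [Field F] {m : Type*} [Fintype m] [DecidableEq m]

lemma J_mul_incl (p : m → Index a) :
    J (Fin a) F * incl F p = incl F (Sum.swap ∘ p) * diagonal (sign F ∘ p) := by
  ext x k
  rw [Matrix.mul_diagonal]
  refine (J_mul_apply _ x k).trans ?_
  by_cases h : x = (p k).swap
  · subst h
    simp [incl, one_apply]
  · have h' : x.swap ≠ p k := fun h' => h (by rw [← h', Sum.swap_swap])
    simp [incl, one_apply, h, h']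

lemma incl_transpose_mul_J (p : m → Index a) :
    (incl F (Sum.swap ∘ p))ᵀ * J (Fin a) F = diagonal (sign F ∘ p) * (incl F p)ᵀ := by
  have hsign : sign F ∘ Sum.swap ∘ p = -(sign F ∘ p) := by ext k; simp
  have hswap : (Sum.swap : Index a → Index a) ∘ Sum.swap ∘ p = p := by ext k; simp
  have h := congrArg transpose (J_mul_incl (F := F) (Sum.swap ∘ p))
  rw [transpose_mul, transpose_mul, J_transpose, hswap, hsign] at h
  rw [← neg_inj, ← Matrix.mul_neg, h]
  ext k x
  simp [diagonal_mul]

lemma J_mul_embed (p : m → Index a) (A : Matrix m m F) :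
    J (Fin a) F * embed p A =
      embed (Sum.swap ∘ p) (diagonal (sign F ∘ p) * A * diagonal (sign F ∘ p)) * J (Fin a) F := by
  have hD : diagonal (sign F ∘ p) * diagonal (sign F ∘ p) = 1 := by
    simp [sign_mul_self]
  have hA : (diagonal (sign F ∘ p) * A * diagonal (sign F ∘ p) - 1) * diagonal (sign F ∘ p) =
      diagonal (sign F ∘ p) * (A - 1) := by
    rw [sub_mul, Matrix.mul_assoc _ _ (diagonal _), hD]
    simp [mul_sub]
  rw [embed, embed, mul_add, add_mul, mul_one, one_mul, Matrix.mul_assoc _ _ (J _ _),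
    incl_transpose_mul_J, ← Matrix.mul_assoc _ (diagonal _), Matrix.mul_assoc _ _ (diagonal _), hA]
  simp only [← Matrix.mul_assoc, J_mul_incl]

end EmbedSymplectic

section Levi

variable {a : ℕ} {F : Type*} [Field F] {i : Fin a} {A B : Matrix (Fin 2) (Fin 2) F}

/-- The condition on a `2 × 2` matrix to act on the span of `eᵢ` and `next i` through an element
of `Sp a F`: this plane is symplectic when `i` is the last index, and isotropic otherwise. -/
structure IsLeviBlock (i : Fin a) (A : Matrix (Fin 2) (Fin 2) F) : Prop where
  isUnit : IsUnit A.det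
  det_eq_one : ¬(i : ℕ) + 1 < a → A.det = 1

lemma IsLeviBlock.of_det_eq_one (h : A.det = 1) : IsLeviBlock i A := ⟨h ▸ isUnit_one, fun _ => h⟩

lemma IsLeviBlock.mul (hA : IsLeviBlock i A) (hB : IsLeviBlock i B) : IsLeviBlock i (A * B) :=
  ⟨by rw [det_mul]; exact hA.isUnit.mul hB.isUnit,
    fun h => by rw [det_mul, hA.det_eq_one h, hB.det_eq_one h, one_mul]⟩

/-- The element of the Levi factor of `minParabolic F i` acting as `A` on the span of `eᵢ` and
`next i`, as a matrix; on the dual plane it acts by the inverse transpose. -/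
noncomputable def leviMatrix (i : Fin a) (A : Matrix (Fin 2) (Fin 2) F) :
    Matrix (Index a) (Index a) F :=
  if (i : ℕ) + 1 < a then embed (pair i) A * embed (Sum.swap ∘ pair i) (A⁻¹)ᵀ
  else embed (pair i) A

lemma swap_comp_pair_injective (i : Fin a) : Function.Injective (Sum.swap ∘ pair i) :=
  Sum.swap_leftInverse.injective.comp (pair_injective i)

lemma pair_ne_swap_pair (hi : (i : ℕ) + 1 < a) (k l : Fin 2) :
    pair i k ≠ (Sum.swap ∘ pair i) l := by
  fin_cases k <;> fin_cases l <;> simp [pair, next, hi]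

lemma commute_embed_pair (hi : (i : ℕ) + 1 < a) (A B : Matrix (Fin 2) (Fin 2) F) :
    Commute (embed (pair i) A) (embed (Sum.swap ∘ pair i) B) :=
  commute_embed_of_disjoint (pair_ne_swap_pair hi) A B

lemma leviMatrix_mul (i : Fin a) (A B : Matrix (Fin 2) (Fin 2) F) :
    leviMatrix i A * leviMatrix i B = leviMatrix i (A * B) := by
  unfold leviMatrix
  split_ifs with hi
  · rw [(commute_embed_pair hi _ _).symm.mul_mul_mul_comm, embed_mul (pair_injective i),
      embed_mul (swap_comp_pair_injective i), ← transpose_mul, ← Matrix.mul_inv_rev]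
  · exact embed_mul (pair_injective i) A B

lemma leviMatrix_one (i : Fin a) : leviMatrix i (1 : Matrix (Fin 2) (Fin 2) F) = 1 := by
  simp [leviMatrix, embed_one]

lemma leviMatrix_transpose (i : Fin a) (A : Matrix (Fin 2) (Fin 2) F) :
    (leviMatrix i A)ᵀ = leviMatrix i Aᵀ := by
  unfold leviMatrix
  split_ifs with hi
  · rw [transpose_mul, embed_transpose, embed_transpose, (commute_embed_pair hi _ _).eq,
      transpose_transpose, transpose_nonsing_inv, transpose_transpose]
  · exact embed_transpose _ A

lemma J_mul_leviMatrix (hi : (i : ℕ) + 1 < a) (hA : IsUnit A.det) :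
    J (Fin a) F * leviMatrix i A = leviMatrix i (Aᵀ)⁻¹ * J (Fin a) F := by
  have h1 : diagonal (sign F ∘ pair i) = 1 := by
    rw [← diagonal_one]
    congr 1
    ext k
    fin_cases k <;> simp [pair, next, hi]
  have h2 : diagonal (sign F ∘ Sum.swap ∘ pair i) = -1 := by
    rw [← diagonal_one, diagonal_neg]
    congr 1
    ext k
    fin_cases k <;> simp [pair, next, hi]
  have hswap : (Sum.swap : Index a → Index a) ∘ Sum.swap ∘ pair i = pair i := by ext k; simp
  rw [leviMatrix, leviMatrix, if_pos hi, if_pos hi, ← Matrix.mul_assoc, J_mul_embed,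
    Matrix.mul_assoc, J_mul_embed, ← Matrix.mul_assoc, h1, h2, hswap,
    nonsing_inv_nonsing_inv _ (by rw [det_transpose]; exact hA), transpose_transpose,
    transpose_nonsing_inv, (commute_embed_pair hi _ _).eq]
  simp

lemma J_mul_leviMatrix_of_not_lt (hi : ¬(i : ℕ) + 1 < a) (A : Matrix (Fin 2) (Fin 2) F) :
    J (Fin a) F * leviMatrix i A = leviMatrix i (adjugate Aᵀ) * J (Fin a) F := by
  have hswap : Sum.swap ∘ pair i = pair i ∘ Equiv.swap 0 1 := by
    ext k
    fin_cases k <;> simp [pair, next, hi]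
  have hA : diagonal (sign F ∘ pair i) * A * diagonal (sign F ∘ pair i) =
      (adjugate Aᵀ).submatrix (Equiv.swap 0 1) (Equiv.swap 0 1) := by
    ext k l
    fin_cases k <;> fin_cases l <;> simp [adjugate_fin_two, pair, next, hi]
  rw [leviMatrix, leviMatrix, if_neg hi, if_neg hi, J_mul_embed, hA, hswap, embed_comp_equiv]

theorem leviMatrix_mem (hA : IsLeviBlock i A) : leviMatrix i A ∈ symplecticGroup (Fin a) F := by
  rw [SymplecticGroup.mem_iff, Matrix.mul_assoc, leviMatrix_transpose]
  by_cases hi : (i : ℕ) + 1 < a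
  · rw [J_mul_leviMatrix hi (A := Aᵀ) (by rw [det_transpose]; exact hA.isUnit), ← Matrix.mul_assoc,
      leviMatrix_mul, transpose_transpose, mul_nonsing_inv A hA.isUnit, leviMatrix_one,
      Matrix.one_mul]
  · rw [J_mul_leviMatrix_of_not_lt hi, ← Matrix.mul_assoc, leviMatrix_mul, transpose_transpose,
      mul_adjugate, hA.det_eq_one hi, one_smul, leviMatrix_one, Matrix.one_mul]

lemma incl_transpose_mul_leviMatrix (i : Fin a) (A : Matrix (Fin 2) (Fin 2) F) :
    (incl F (pair i))ᵀ * leviMatrix i A = A * (incl F (pair i))ᵀ := by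
  unfold leviMatrix
  split_ifs with hi
  · rw [← Matrix.mul_assoc, incl_transpose_mul_embed (pair_injective i), Matrix.mul_assoc,
      incl_transpose_mul_embed_of_disjoint (pair_ne_swap_pair hi)]
  · exact incl_transpose_mul_embed (pair_injective i) A

lemma leviMatrix_mul_apply (i : Fin a) (A : Matrix (Fin 2) (Fin 2) F)
    (M : Matrix (Index a) (Index a) F) (k : Fin 2) (q : Index a) :
    (leviMatrix i A * M) (pair i k) q = A k 0 * M (.inl i) q + A k 1 * M (next i) q := by
  have h : (leviMatrix i A * M).submatrix (pair i) id = A * M.submatrix (pair i) id := by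
    rw [← incl_transpose_mul, ← Matrix.mul_assoc, incl_transpose_mul_leviMatrix, Matrix.mul_assoc,
      incl_transpose_mul]
  simpa [Matrix.mul_apply, Fin.sum_univ_two] using congrFun (congrFun h k) q

lemma mul_leviMatrix_apply (i : Fin a) (A : Matrix (Fin 2) (Fin 2) F)
    (M : Matrix (Index a) (Index a) F) (q : Index a) (k : Fin 2) :
    (M * leviMatrix i A) q (pair i k) = M q (.inl i) * A 0 k + M q (next i) * A 1 k := by
  have h := leviMatrix_mul_apply i Aᵀ Mᵀ k q
  rw [← leviMatrix_transpose, ← transpose_mul] at h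
  simpa [mul_comm] using h

lemma leviMatrix_blockTriangular (i : Fin a) (A : Matrix (Fin 2) (Fin 2) F) :
    (leviMatrix i A).BlockTriangular (minWeight i) := by
  have h1 : (embed (pair i) A).BlockTriangular (minWeight i) :=
    embed_blockTriangular fun k l h => by simp [minWeight_pair] at h
  unfold leviMatrix
  split_ifs with hi
  · refine h1.mul (embed_blockTriangular fun k l h => ?_)
    simp [(minWeight i).map_swap, minWeight_pair] at h
  · exact h1

/-- The element of the Levi factor of `minParabolic F i` given by `leviMatrix i A`. -/
noncomputable def levi (i : Fin a) (A : Matrix (Fin 2) (Fin 2) F) (hA : IsLeviBlock i A) :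
    Sp a F := ⟨leviMatrix i A, leviMatrix_mem hA⟩

lemma levi_mul (hA : IsLeviBlock i A) (hB : IsLeviBlock i B) :
    levi i A hA * levi i B hB = levi i (A * B) (hA.mul hB) := Subtype.ext (leviMatrix_mul i A B)

lemma IsLeviBlock.pow (hA : IsLeviBlock i A) (n : ℕ) : IsLeviBlock i (A ^ n) :=
  ⟨by rw [det_pow]; exact hA.isUnit.pow n, fun h => by rw [det_pow, hA.det_eq_one h, one_pow]⟩

lemma levi_pow (hA : IsLeviBlock i A) (n : ℕ) : levi i A hA ^ n = levi i (A ^ n) (hA.pow n) := by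
  induction n with
  | zero => exact Subtype.ext (leviMatrix_one i).symm
  | succ n ih => simp only [pow_succ, ih, levi_mul]

lemma levi_eq_one_iff (hA : IsLeviBlock i A) : levi i A hA = 1 ↔ A = 1 := by
  refine ⟨fun h => ?_, fun h => Subtype.ext (h ▸ leviMatrix_one i)⟩
  have hmat : leviMatrix i A = 1 := congrArg Subtype.val h
  have hincl := congrArg (· * incl F (pair i)) (incl_transpose_mul_leviMatrix i A)
  simpa [hmat, Matrix.mul_assoc, incl_transpose_mul_incl (pair_injective i)] using hincl.symm

lemma levi_mem_minParabolic (hA : IsLeviBlock i A) : levi i A hA ∈ minParabolic F i :=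
  leviMatrix_blockTriangular i A

/-- The element `1 + c E` of the root subgroup of the `i`-th simple root. -/
noncomputable def rootElement (i : Fin a) (c : F) : Sp a F :=
  levi i !![1, c; 0, 1] (.of_det_eq_one (by simp))

/-- A representative of the `i`-th simple reflection. -/
noncomputable def reflection (F : Type*) [Field F] (i : Fin a) : Sp a F :=
  levi i !![0, 1; -1, 0] (.of_det_eq_one (by simp))

lemma rootElement_add (i : Fin a) (c d : F) :
    rootElement i c * rootElement i d = rootElement i (c + d) := by
  simp [rootElement, levi_mul, add_comm]

lemma rootElement_zero (i : Fin a) : rootElement i (0 : F) = 1 :=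
  Subtype.ext ((congrArg (leviMatrix i) one_fin_two.symm).trans (leviMatrix_one i))

lemma rootElement_neg (i : Fin a) (c : F) : rootElement i (-c) = (rootElement i c)⁻¹ := by
  rw [eq_inv_iff_mul_eq_one, rootElement_add, neg_add_cancel, rootElement_zero]

lemma rootElement_pow (i : Fin a) (c : F) (n : ℕ) :
    rootElement i c ^ n = rootElement i (n * c) := by
  induction n with
  | zero => simp [rootElement_zero]
  | succ n ih => rw [pow_succ, ih, rootElement_add, Nat.cast_succ, add_one_mul]

lemma rootElement_mul_apply (i : Fin a) (c : F) {u : Sp a F} (hu : u ∈ unipotent a F) :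
    (rootElement i c * u).1 (.inl i) (next i) = u.1 (.inl i) (next i) + c := by
  refine (leviMatrix_mul_apply i !![1, c; 0, 1] u.1 0 (next i)).trans ?_
  simp [(mem_unipotent_iff.1 hu).2]

lemma rootElement_apply (i : Fin a) (c : F) : (rootElement i c).1 (.inl i) (next i) = c := by
  simpa [Matrix.one_apply_ne (inl_ne_next i)] using rootElement_mul_apply i c (one_mem _)

lemma rootElement_one_ne_one (i : Fin a) : rootElement i (1 : F) ≠ 1 := fun h => by
  have h1 := rootElement_apply i (1 : F)
  rw [h, OneMemClass.coe_one, Matrix.one_apply_ne (inl_ne_next i)] at h1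
  exact zero_ne_one h1

lemma rootElement_mem_radical {τ : Weight a} {i : Fin a} (hτ : τ (.inl i) < τ (next i)) (c : F) :
    rootElement i c ∈ radical F τ := by
  have h1 : StrictBlockTriangular (embed (pair i) !![1, c; 0, 1] - 1) τ := by
    refine embed_sub_one_strictBlockTriangular fun k l hkl => ?_
    fin_cases k <;> fin_cases l <;> simp at hkl ⊢
    omega
  have h2 : StrictBlockTriangular (embed (Sum.swap ∘ pair i) (!![1, c; 0, 1]⁻¹)ᵀ - 1) τ := by
    refine embed_sub_one_strictBlockTriangular fun k l hkl => ?_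
    simp only [Function.comp_apply, Weight.map_swap] at hkl
    fin_cases k <;> fin_cases l <;> simp [inv_def] at hkl ⊢
    omega
  rw [mem_radical]
  change StrictBlockTriangular (leviMatrix i _ - 1) _
  unfold leviMatrix
  split_ifs with hi
  · rw [← sub_add_sub_cancel _ (embed (Sum.swap ∘ pair i) _) 1, ← sub_one_mul]
    exact (h1.mul_blockTriangular (blockTriangular_of_sub_one h2)).add h2
  · exact h1

lemma rootElement_mem_unipotent (i : Fin a) (c : F) : rootElement i c ∈ unipotent a F :=
  rootElement_mem_radical (height_lt_next i) c

lemma rootElement_neg_mul_mem_minRadical (i : Fin a) {u : Sp a F} (hu : u ∈ unipotent a F) :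
    rootElement i (-u.1 (.inl i) (next i)) * u ∈ minRadical F i :=
  mem_minRadical_of_mem_unipotent (mul_mem (rootElement_mem_unipotent i _) hu)
    (by rw [rootElement_mul_apply i _ hu, add_neg_cancel])

open DefectZero in
theorem cosetSum_unipotent {k : Type*} [AddCommMonoid k] [Fintype F] (i : Fin a) (f : Sp a F → k)
    (g : Sp a F) :
    cosetSum (unipotent a F) f g = ∑ c : F, cosetSum (minRadical F i) f (g * rootElement i c) := by
  have := Fintype.ofFinite (unipotent a F)
  have := Fintype.ofFinite (minRadical F i)
  simp only [cosetSum_eq_sum]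
  rw [← Fintype.sum_prod_type', eq_comm]
  refine Fintype.sum_bijective (fun x : F × minRadical F i => (⟨rootElement i x.1 * x.2.1,
    mul_mem (rootElement_mem_unipotent i _) (minRadical_le_unipotent i x.2.2)⟩ : unipotent a F))
    ⟨?_, fun u => ?_⟩ _ _ fun x => by rw [mul_assoc]
  · have hcoord (x : F × minRadical F i) :
        (rootElement i x.1 * x.2.1).1 (.inl i) (next i) = x.1 := by
      have h0 := x.2.2 (minWeight_pair i 1).le
      rw [rootElement_mul_apply i _ (minRadical_le_unipotent i x.2.2)]
      simpa [Matrix.one_apply_ne (inl_ne_next i)] using h0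
    rintro ⟨c, u⟩ ⟨c', u'⟩ h
    have h' : rootElement i c * u.1 = rootElement i c' * u'.1 := congrArg Subtype.val h
    obtain rfl : c = c' := by simpa only [h', hcoord (c', u')] using (hcoord (c, u)).symm
    exact Prod.ext rfl (Subtype.ext (mul_left_cancel h'))
  · refine ⟨(u.1.1 (.inl i) (next i), ⟨_, rootElement_neg_mul_mem_minRadical i u.2⟩), ?_⟩
    simp [rootElement_neg]

end Levi

lemma one_add_pow_char {S : Type*} [Ring S] (ℓ : ℕ) [Fact ℓ.Prime] [CharP S ℓ] {x : S}
    (hx : x * x = 0) : (1 + x) ^ ℓ = 1 := by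
  have hℓ : ℓ.Prime := Fact.out
  rw [add_pow_char_of_commute _ (Commute.one_left x), one_pow,
    pow_eq_zero_of_le hℓ.two_le (by rw [sq, hx]), add_zero]

section BinaryForm

variable {F : Type*} [Field F] [Finite F]

lemma exists_binaryForm_eq {d₁ d₂ c : F} (hd₁ : d₁ ≠ 0) (hc : c ^ 2 ≠ 4 * d₁ * d₂) (e : F) :
    ∃ x y : F, d₁ * x ^ 2 + c * x * y + d₂ * y ^ 2 = e := by
  by_cases h2 : ringChar F = 2
  · obtain ⟨x, hx⟩ := FiniteField.isSquare_of_char_two h2 (e / d₁)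
    exact ⟨x, 0, by rw [div_eq_iff hd₁] at hx; linear_combination -hx⟩
  have := Fintype.ofFinite F
  have htwo : (2 : F) ≠ 0 := Ring.two_ne_zero h2
  have hm : 4 * d₁ * d₂ - c ^ 2 ≠ 0 := sub_ne_zero.2 hc.symm
  -- Completing the square turns the equation into `z ^ 2 + (4 d₁ d₂ - c ^ 2) y ^ 2 = 4 d₁ e`.
  obtain ⟨z, y, hzy⟩ := FiniteField.exists_root_sum_quadratic
    (f := Polynomial.X ^ 2 - Polynomial.C (4 * d₁ * e))
    (g := Polynomial.C (4 * d₁ * d₂ - c ^ 2) * Polynomial.X ^ 2)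
    (Polynomial.degree_X_pow_sub_C two_pos _)
    (by rw [Polynomial.degree_C_mul hm, Polynomial.degree_X_pow]; rfl)
    (FiniteField.odd_card_of_char_ne_two h2)
  simp only [Polynomial.eval_sub, Polynomial.eval_pow, Polynomial.eval_X, Polynomial.eval_C,
    Polynomial.eval_mul] at hzy
  refine ⟨(z - c * y) / (2 * d₁), y, mul_left_cancel₀ (mul_ne_zero htwo htwo) ?_⟩
  field_simp
  linear_combination hzy

lemma exists_binaryForm_singular {d₁ d₂ c : F} (hd₁ : d₁ ≠ 0) (hc : c ^ 2 = 4 * d₁ * d₂) :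
    ∃ x y : F, y ≠ 0 ∧ 2 * d₁ * x + c * y = 0 ∧ c * x + 2 * d₂ * y = 0 ∧
      d₁ * x ^ 2 + c * x * y + d₂ * y ^ 2 = 0 := by
  by_cases h2 : ringChar F = 2
  · have : CharP F 2 := ringChar.of_eq h2
    have htwo : (2 : F) = 0 := CharTwo.two_eq_zero
    have hc0 : c ^ 2 = 0 := by linear_combination hc + 2 * d₁ * d₂ * htwo
    obtain rfl : c = 0 := (pow_eq_zero_iff two_ne_zero).1 hc0
    obtain ⟨x, hx⟩ := FiniteField.isSquare_of_char_two h2 (-d₂ / d₁)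
    rw [div_eq_iff hd₁] at hx
    exact ⟨x, 1, one_ne_zero, by simp [htwo], by simp [htwo], by linear_combination -hx⟩
  · refine ⟨c, -(2 * d₁), ?_, by ring, by linear_combination hc, by linear_combination -d₁ * hc⟩
    exact neg_ne_zero.2 (mul_ne_zero (Ring.two_ne_zero h2) hd₁)

end BinaryForm

section Twist

open SymplecticGroup (symJ)

variable {a : ℕ} {F : Type*} [Field F] {i : Fin a} {R : Sp a F} {A B h : Matrix (Fin 2) (Fin 2) F}

lemma inv_mul_J (g : Sp a F) : (g⁻¹).1 * J (Fin a) F = J (Fin a) F * g.1ᵀ := by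
  rw [← SymplecticGroup.mem_iff.1 g.2]
  simp only [← Matrix.mul_assoc, coe_inv_mul_coe, Matrix.one_mul]
  rw [SymplecticGroup.mem_iff.1 g.2]

lemma levi_inv_mul_symJ_mul_levi (hR : ∀ A, Commute R.1 (leviMatrix i A)) (hA : IsLeviBlock i A)
    (hB : IsLeviBlock i B) (hh : IsLeviBlock i h) (hAB : hᵀ * A * h = B) :
    (levi i h hh)⁻¹ * (symJ (Fin a) F * R * levi i A hA) * levi i h hh =
      symJ (Fin a) F * R * levi i B hB := by
  have hinv : ((levi i h hh)⁻¹).1 * J (Fin a) F = J (Fin a) F * leviMatrix i hᵀ := by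
    rw [inv_mul_J, ← leviMatrix_transpose]
    rfl
  apply Subtype.ext
  calc ((levi i h hh)⁻¹).1 * (J (Fin a) F * R.1 * leviMatrix i A) * leviMatrix i h
    _ = ((levi i h hh)⁻¹).1 * J (Fin a) F * R.1 * leviMatrix i A * leviMatrix i h := by
      simp only [Matrix.mul_assoc]
    _ = J (Fin a) F * (R.1 * leviMatrix i hᵀ) * leviMatrix i A * leviMatrix i h := by
      rw [hinv, Matrix.mul_assoc _ _ R.1, (hR _).eq]
    _ = J (Fin a) F * R.1 * leviMatrix i B := by
      rw [← hAB, ← leviMatrix_mul, ← leviMatrix_mul]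
      simp only [Matrix.mul_assoc]

variable {ℓ : ℕ} {k : Type*} {f : Sp a F → k}

open DefectZero

lemma cosetSum_symJ_mul_levi_congr [AddCommMonoid k] (hf : ∀ g h : Sp a F, f (h * g * h⁻¹) = f g)
    (hR : ∀ A, Commute R.1 (leviMatrix i A)) (hA : IsLeviBlock i A) (hB : IsLeviBlock i B)
    (hh : h.det = 1) (hAB : hᵀ * A * h = B) :
    cosetSum (minRadical F i) f (symJ (Fin a) F * R * levi i B hB) =
      cosetSum (minRadical F i) f (symJ (Fin a) F * R * levi i A hA) := by
  have hh' : IsLeviBlock i h := .of_det_eq_one hh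
  rw [← levi_inv_mul_symJ_mul_levi hR hA hB hh' hAB]
  simpa only [inv_inv] using cosetSum_conj hf (symJ (Fin a) F * R * levi i A hA)
    (conj_mem_radical_iff (inv_mem (levi_mem_minParabolic hh')))

variable [Finite F] [Fact ℓ.Prime] [CharP F ℓ] [Semiring k] [CharP k ℓ]

/- A singular vector of the form with Gram matrix `A` gives a transvection of order `ℓ` which is an
isometry of the form, and which therefore centralizes `symJ * R * levi A`. -/
lemma cosetSum_symJ_mul_levi_eq_zero (hf : IsDefectZeroClassFunction ℓ f)
    (hR : ∀ A, Commute R.1 (leviMatrix i A)) {d₁ d₂ c : F} (hd₁ : d₁ ≠ 0)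
    (hc : c ^ 2 = 4 * d₁ * d₂) (hA : IsLeviBlock i !![d₁, c; 0, d₂]) :
    cosetSum (minRadical F i) f (symJ (Fin a) F * R * levi i _ hA) = 0 := by
  obtain ⟨x, y, hy, h1, h2, h3⟩ := exists_binaryForm_singular hd₁ hc
  let N : Matrix (Fin 2) (Fin 2) F := !![-(x * y), x ^ 2; -y ^ 2, x * y]
  have hN : N * N = 0 := by
    ext k l; fin_cases k <;> fin_cases l <;> simp [N, Matrix.mul_apply] <;> ring
  have hdet : (1 + N).det = 1 := by simp [N, Matrix.det_fin_two]; ring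
  have hisom : (1 + N)ᵀ * !![d₁, c; 0, d₂] * (1 + N) = !![d₁, c; 0, d₂] := by
    ext k l
    fin_cases k <;> fin_cases l <;> simp [N, Matrix.mul_apply]
    · linear_combination -y * h1 + y ^ 2 * h3
    · linear_combination x * h1 - (1 + x * y) * h3
    · linear_combination x * h1 - (1 + x * y) * h3
    · linear_combination x * h2 + x ^ 2 * h3
  have hL : IsLeviBlock i (1 + N) := .of_det_eq_one hdet
  refine cosetSum_eq_zero hf (d := levi i _ hL) (fun h => ?_) ?_
    (conj_mem_radical_iff (levi_mem_minParabolic hL)) ?_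
  · have h10 := congrFun (congrFun ((levi_eq_one_iff hL).1 h) 1) 0
    simp [N, hy] at h10
  · rw [levi_pow, levi_eq_one_iff, one_add_pow_char ℓ hN]
  · have htwist := levi_inv_mul_symJ_mul_levi hR hA hA hL hisom
    rw [mul_assoc, inv_mul_eq_iff_eq_mul] at htwist
    rw [mul_assoc _⁻¹, ← htwist, inv_mul_cancel_left, mul_inv_cancel]
    exact one_mem _

lemma cosetSum_symJ_mul_levi_upper (hf : IsDefectZeroClassFunction ℓ f)
    (hR : ∀ A, Commute R.1 (leviMatrix i A)) {d₁ d₂ e₁ e₂ : F} (c : F) (hd₁ : d₁ ≠ 0) (he₁ : e₁ ≠ 0)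
    (hde : d₁ * d₂ = e₁ * e₂) (hA : IsLeviBlock i !![d₁, c; 0, d₂])
    (hB : IsLeviBlock i !![e₁, c; 0, e₂]) :
    cosetSum (minRadical F i) f (symJ (Fin a) F * R * levi i _ hB) =
      cosetSum (minRadical F i) f (symJ (Fin a) F * R * levi i _ hA) := by
  by_cases hc : c ^ 2 = 4 * d₁ * d₂
  · have hc' : c ^ 2 = 4 * e₁ * e₂ := by rw [hc, mul_assoc, mul_assoc, hde]
    rw [cosetSum_symJ_mul_levi_eq_zero hf hR hd₁ hc hA,
      cosetSum_symJ_mul_levi_eq_zero hf hR he₁ hc' hB]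
  obtain ⟨x, y, hxy⟩ := exists_binaryForm_eq hd₁ hc e₁
  refine cosetSum_symJ_mul_levi_congr hf.conj hR hA hB
    (h := !![x, -(d₂ * y) / e₁; y, (d₁ * x + c * y) / e₁]) ?_ ?_
  · rw [det_fin_two_of]
    field_simp
    linear_combination hxy
  · ext k l
    fin_cases k <;> fin_cases l <;> simp [Matrix.mul_apply, Fin.sum_univ_two] <;> field_simp
    · linear_combination hxy
    · linear_combination c * hxy
    · ring
    · linear_combination d₁ * d₂ * hxy + e₁ * hde

lemma cosetSum_unipotent_symJ_mul_levi (hf : IsDefectZeroClassFunction ℓ f)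
    (hR : ∀ A, Commute R.1 (leviMatrix i A)) {d₁ d₂ e₁ e₂ : F} (hd₁ : d₁ ≠ 0) (he₁ : e₁ ≠ 0)
    (hde : d₁ * d₂ = e₁ * e₂) (hA : IsLeviBlock i !![d₁, 0; 0, d₂])
    (hB : IsLeviBlock i !![e₁, 0; 0, e₂]) :
    cosetSum (unipotent a F) f (symJ (Fin a) F * R * levi i _ hB) =
      cosetSum (unipotent a F) f (symJ (Fin a) F * R * levi i _ hA) := by
  have := Fintype.ofFinite F
  have hupper {d₁ d₂ : F} (h : IsLeviBlock i !![d₁, 0; 0, d₂]) (c : F) :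
      IsLeviBlock i !![d₁, c; 0, d₂] := ⟨by simpa using h.isUnit, by simpa using h.det_eq_one⟩
  have hsum {d₁ d₂ : F} (hd₁ : d₁ ≠ 0) (h : IsLeviBlock i !![d₁, 0; 0, d₂]) :
      cosetSum (unipotent a F) f (symJ (Fin a) F * R * levi i _ h) =
        ∑ c, cosetSum (minRadical F i) f (symJ (Fin a) F * R * levi i _ (hupper h c)) := by
    rw [cosetSum_unipotent i]
    refine Fintype.sum_equiv (Equiv.mulLeft₀ d₁ hd₁) _ _ fun c => ?_
    rw [rootElement, mul_assoc, levi_mul]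
    simp
  rw [hsum hd₁ hA, hsum he₁ hB]
  exact Finset.sum_congr rfl fun c _ => cosetSum_symJ_mul_levi_upper hf hR c hd₁ he₁ hde _ _

end Twist

section Torus

variable {a : ℕ} {F : Type*} [Field F] {i : Fin a}

/-- The diagonal entries of the element of the maximal torus with coordinates `d`. -/
def torusEntry (d : Fin a → Fˣ) : Index a → F := Sum.elim (fun i => d i) (fun i => ((d i)⁻¹ : Fˣ))

@[simp] lemma torusEntry_inl (d : Fin a → Fˣ) (i : Fin a) : torusEntry d (.inl i) = d i := rfl

@[simp] lemma torusEntry_inr (d : Fin a → Fˣ) (i : Fin a) :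
    torusEntry d (.inr i) = ((d i)⁻¹ : Fˣ) := rfl

lemma torusEntry_swap (d : Fin a → Fˣ) (p : Index a) :
    torusEntry d p.swap = (torusEntry d p)⁻¹ := by
  rcases p with i | i <;> simp

lemma torusEntry_ne_zero (d : Fin a → Fˣ) (p : Index a) : torusEntry d p ≠ 0 := by
  rcases p with i | i <;> simp

lemma diagonal_torusEntry_mem (d : Fin a → Fˣ) :
    diagonal (torusEntry d) ∈ symplecticGroup (Fin a) F := by
  rw [SymplecticGroup.mem_iff]
  ext x y
  rw [diagonal_transpose, Matrix.mul_diagonal, Matrix.diagonal_mul, J_apply]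
  split_ifs with h
  · subst h
    rw [torusEntry_swap]
    field_simp [torusEntry_ne_zero]
  · simp

/-- The maximal torus of diagonal matrices. -/
def torus (a : ℕ) (F : Type*) [Field F] : (Fin a → Fˣ) →* Sp a F where
  toFun d := ⟨diagonal (torusEntry d), diagonal_torusEntry_mem d⟩
  map_one' := Subtype.ext <| by
    refine diagonal_eq_one.2 (funext ?_)
    rintro (_ | _) <;> simp
  map_mul' d e := Subtype.ext <| by
    change diagonal _ = diagonal _ * diagonal _
    rw [diagonal_mul_diagonal]
    refine congrArg diagonal (funext ?_)
    rintro (x | x) <;> simp [mul_comm]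

lemma coe_torus (d : Fin a → Fˣ) : (torus a F d).1 = diagonal (torusEntry d) := rfl

lemma torus_mem_borel (d : Fin a → Fˣ) : torus a F d ∈ borel a F := blockTriangular_diagonal _

lemma commute_torus_leviMatrix {d : Fin a → Fˣ} (h : ∀ k, torusEntry d (pair i k) = 1)
    (A : Matrix (Fin 2) (Fin 2) F) : Commute (torus a F d).1 (leviMatrix i A) := by
  have hpair := commute_diagonal_embed h A
  unfold leviMatrix
  split_ifs with hi
  · exact hpair.mul_right (commute_diagonal_embed (fun k => by simp [torusEntry_swap, h]) _)
  · exact hpair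

lemma leviMatrix_diagonal {d : Fin a → Fˣ} (h : ∀ j, .inl j ∉ Set.range (pair i) → d j = 1) :
    leviMatrix i (diagonal (torusEntry d ∘ pair i)) = (torus a F d).1 := by
  rw [coe_torus, leviMatrix]
  split_ifs with hi
  · have hinv : (diagonal (torusEntry d ∘ pair i))⁻¹ᵀ =
        diagonal (torusEntry d ∘ Sum.swap ∘ pair i) := by
      rw [inv_eq_left_inv (B := diagonal (torusEntry d ∘ Sum.swap ∘ pair i)), diagonal_transpose]
      rw [diagonal_mul_diagonal, diagonal_eq_one]
      ext k
      simp [torusEntry_swap, torusEntry_ne_zero]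
    have hinl : torusEntry d ∘ pair i = Sum.elim (fun j => (d j : F)) 1 ∘ pair i := by
      ext k
      fin_cases k <;> simp [pair, next, hi]
    have hinr : torusEntry d ∘ Sum.swap ∘ pair i =
        Sum.elim (fun _ => 1) (fun j => (((d j)⁻¹ : Fˣ) : F)) ∘ Sum.swap ∘ pair i := by
      ext k
      fin_cases k <;> simp [pair, next, hi]
    rw [hinv, hinl, hinr, embed_diagonal (pair_injective i),
      embed_diagonal (swap_comp_pair_injective i), diagonal_mul_diagonal]
    · congr 1
      ext x
      rcases x with x | x <;> simp
    · rintro (x | x) hx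
      · rfl
      · have hd : d x = 1 := h x fun ⟨k, hk⟩ => hx ⟨k, by simp [hk]⟩
        simp [hd]
    · rintro (x | x) hx
      · simp [h x hx]
      · rfl
  · refine embed_diagonal (pair_injective i) ?_
    rintro (x | x) hx
    · simp [h x hx]
    · have hd : d x = 1 := h x fun ⟨k, hk⟩ => hx ⟨1, by
        fin_cases k <;> simp_all [next_of_not_lt hi]⟩
      simp [hd]

open DefectZero SymplecticGroup

variable {ℓ : ℕ} [Fact ℓ.Prime] [CharP F ℓ] [Finite F] {k : Type*} [Semiring k] [CharP k ℓ]
  {f : Sp a F → k} {d e : Fin a → Fˣ}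

omit [Fact ℓ.Prime] [CharP F ℓ] [Finite F] [Semiring k] [CharP k ℓ] in
lemma torusEntry_pair_congr (h : ∀ j, .inl j ∈ Set.range (pair i) → d j = e j) (k : Fin 2) :
    torusEntry d (pair i k) = torusEntry e (pair i k) := by
  rcases hx : pair i k with j | j
  · simp [h j ⟨k, hx⟩]
  · have hj : j = i := by
      by_cases hi : (i : ℕ) + 1 < a <;> fin_cases k <;> simp [pair, next, hi] at hx
      exact hx.symm
    simp [hj, h i ⟨0, rfl⟩]

omit [Fact ℓ.Prime] [CharP F ℓ] [Finite F] [Semiring k] [CharP k ℓ] in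
lemma isLeviBlock_torusEntry (i : Fin a) (d : Fin a → Fˣ) :
    IsLeviBlock i !![torusEntry d (.inl i), 0; 0, torusEntry d (next i)] where
  isUnit := by simp [torusEntry_ne_zero]
  det_eq_one hi := by simp [next, hi]

lemma cosetSum_unipotent_symJ_mul_torus_congr (hf : IsDefectZeroClassFunction ℓ f)
    (hde : ∀ j, .inl j ∉ Set.range (pair i) → d j = e j)
    (hprod : torusEntry d (.inl i) * torusEntry d (next i) =
      torusEntry e (.inl i) * torusEntry e (next i)) :
    cosetSum (unipotent a F) f (symJ (Fin a) F * torus a F d) =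
      cosetSum (unipotent a F) f (symJ (Fin a) F * torus a F e) := by
  classical
  let s : Set (Fin a) := {j | .inl j ∈ Set.range (pair i)}
  have hsplit (c : Fin a → Fˣ) : torus a F c =
      torus a F (sᶜ.mulIndicator c) * levi i _ (isLeviBlock_torusEntry i c) := by
    have hs : torus a F (s.mulIndicator c) = levi i _ (isLeviBlock_torusEntry i c) := by
      refine Subtype.ext ?_
      rw [← leviMatrix_diagonal (i := i) fun j hj =>
        Set.mulIndicator_of_notMem (s := s) hj c]
      rw [show torusEntry (s.mulIndicator c) ∘ pair i = torusEntry c ∘ pair i from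
        funext <| torusEntry_pair_congr fun j hj => Set.mulIndicator_of_mem (s := s) hj c]
      refine congrArg (leviMatrix i) ?_
      ext k l
      fin_cases k <;> fin_cases l <;> simp
    rw [← hs, ← map_mul, Set.mulIndicator_compl_mul_self]
  have hcompl : sᶜ.mulIndicator d = sᶜ.mulIndicator e :=
    Set.mulIndicator_congr fun j hj => hde j hj
  rw [hsplit d, hsplit e, hcompl, ← mul_assoc, ← mul_assoc]
  refine cosetSum_unipotent_symJ_mul_levi hf (fun A => commute_torus_leviMatrix (fun k => ?_) A)
    (torusEntry_ne_zero _ _) (torusEntry_ne_zero _ _) hprod.symm _ _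
  rw [torusEntry_pair_congr (e := 1)]
  · rcases pair i k with _ | _ <;> simp
  · exact fun j hj => Set.mulIndicator_of_notMem (s := sᶜ) (fun h => h hj) e

lemma cosetSum_unipotent_symJ_mul_torus_mulSingle_div (hf : IsDefectZeroClassFunction ℓ f)
    (d : Fin a → Fˣ) {i j : Fin a} (hij : next i = .inl j) (u : Fˣ) :
    cosetSum (unipotent a F) f
        (symJ (Fin a) F * torus a F (d * (Pi.mulSingle i u * (Pi.mulSingle j u)⁻¹))) =
      cosetSum (unipotent a F) f (symJ (Fin a) F * torus a F d) := by
  have hne : i ≠ j := by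
    rintro rfl
    exact (pair_injective i).ne zero_ne_one hij.symm
  refine cosetSum_unipotent_symJ_mul_torus_congr (i := i) hf (fun l hl => ?_) ?_
  · have hli : l ≠ i := by
      rintro rfl
      exact hl ⟨0, rfl⟩
    have hlj : l ≠ j := by
      rintro rfl
      exact hl ⟨1, hij⟩
    simp [hli, hlj]
  · rw [hij]
    simp only [torusEntry_inl, Pi.mul_apply, Pi.inv_apply, Pi.mulSingle_eq_same,
      Pi.mulSingle_eq_of_ne hne, Pi.mulSingle_eq_of_ne hne.symm, Units.val_mul, inv_one, mul_one,
      one_mul]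
    rw [mul_mul_mul_comm, Units.mul_inv, mul_one]

lemma cosetSum_unipotent_symJ_mul_torus_mulSingle_last (hf : IsDefectZeroClassFunction ℓ f)
    (d : Fin a → Fˣ) {i : Fin a} (hi : next i = .inr i) (u : Fˣ) :
    cosetSum (unipotent a F) f (symJ (Fin a) F * torus a F (d * Pi.mulSingle i u)) =
      cosetSum (unipotent a F) f (symJ (Fin a) F * torus a F d) := by
  refine cosetSum_unipotent_symJ_mul_torus_congr (i := i) hf (fun j hj => ?_) ?_
  · have hji : j ≠ i := by
      rintro rfl
      exact hj ⟨0, rfl⟩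
    simp [hji]
  · rw [hi]
    simp only [torusEntry_inl, torusEntry_inr, Units.mul_inv]

lemma cosetSum_unipotent_symJ_mul_torus (hf : IsDefectZeroClassFunction ℓ f) (d : Fin a → Fˣ) :
    cosetSum (unipotent a F) f (symJ (Fin a) F * torus a F d) =
      cosetSum (unipotent a F) f (symJ (Fin a) F) := by
  let H : Subgroup (Fin a → Fˣ) :=
    { carrier := {e | ∀ d, cosetSum (unipotent a F) f (symJ (Fin a) F * torus a F (d * e)) =
        cosetSum (unipotent a F) f (symJ (Fin a) F * torus a F d)}
      one_mem' d := by rw [mul_one]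
      mul_mem' he he' d := by rw [← mul_assoc, he', he]
      inv_mem' {e} he d := by rw [← he, inv_mul_cancel_right] }
  have hsingle (i : Fin a) (u : Fˣ) : Pi.mulSingle i u ∈ H := by
    induction i using WellFoundedGT.induction with
    | _ i ih =>
    by_cases hi : (i : ℕ) + 1 < a
    · let j : Fin a := ⟨i + 1, hi⟩
      have hdiv : Pi.mulSingle i u * (Pi.mulSingle j u)⁻¹ ∈ H := fun d =>
        cosetSum_unipotent_symJ_mul_torus_mulSingle_div hf d (next_of_lt hi) u
      simpa using mul_mem hdiv (ih j (Fin.lt_def.2 (Nat.lt_succ_self i)))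
    · exact fun d => cosetSum_unipotent_symJ_mul_torus_mulSingle_last hf d (next_of_not_lt hi) u
  have hd : d ∈ H := by
    rw [← Finset.univ_prod_mulSingle d]
    exact prod_mem fun i _ => hsingle i (d i)
  simpa using hd 1

end Torus

section WeylGroup

variable {a : ℕ}

/-- The Weyl group of type `Cₐ`, as the group of signed permutations of the basis vectors. -/
def weylGroup (a : ℕ) : Subgroup (Equiv.Perm (Index a)) :=
  Subgroup.centralizer {Equiv.sumComm (Fin a) (Fin a)}

lemma mem_weylGroup {π : Equiv.Perm (Index a)} :
    π ∈ weylGroup a ↔ ∀ p : Index a, π p.swap = (π p).swap := by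
  rw [weylGroup, Subgroup.mem_centralizer_singleton_iff, Equiv.ext_iff]
  exact Iff.rfl

lemma weylGroup_apply_swap (π : weylGroup a) (p : Index a) : π.1 p.swap = (π.1 p).swap :=
  mem_weylGroup.1 π.2 p

lemma weylGroup_apply_inr (π : weylGroup a) (j : Fin a) :
    π.1 (.inr j) = (π.1 (.inl j)).swap := weylGroup_apply_swap π (.inl j)

lemma weylGroup_ext {π σ : weylGroup a} (h : ∀ j, π.1 (.inl j) = σ.1 (.inl j)) : π = σ := by
  refine Subtype.ext (Equiv.ext ?_)
  rintro (j | j)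
  · exact h j
  · rw [weylGroup_apply_inr, weylGroup_apply_inr, h]

/-- The longest element of the Weyl group. -/
def longest (a : ℕ) : weylGroup a := ⟨Equiv.sumComm _ _, mem_weylGroup.2 fun _ => rfl⟩

@[simp] lemma longest_apply (p : Index a) : (longest a).1 p = p.swap := rfl

/-- The `i`-th simple reflection, which exchanges `eᵢ` and `next i`. -/
def simpleReflection (i : Fin a) : weylGroup a :=
  if hi : (i : ℕ) + 1 < a then
    ⟨Equiv.sumCongr (Equiv.swap i ⟨i + 1, hi⟩) (Equiv.swap i ⟨i + 1, hi⟩),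
      mem_weylGroup.2 fun p => by cases p <;> rfl⟩
  else
    ⟨Equiv.swap (.inl i) (.inr i), mem_weylGroup.2 fun p => by
      rcases p with j | j <;> by_cases h : j = i <;> simp [Equiv.swap_apply_def, h]⟩

lemma simpleReflection_inl_of_lt {i : Fin a} (hi : (i : ℕ) + 1 < a) (j : Fin a) :
    (simpleReflection i).1 (.inl j) = .inl (Equiv.swap i ⟨i + 1, hi⟩ j) := by
  rw [simpleReflection, dif_pos hi]
  rfl

lemma simpleReflection_inl_of_not_lt {i : Fin a} (hi : ¬(i : ℕ) + 1 < a) (j : Fin a) :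
    (simpleReflection i).1 (.inl j) = if j = i then .inr i else .inl j := by
  rw [simpleReflection, dif_neg hi]
  simp [Equiv.swap_apply_def]

lemma simpleReflection_eq_swap_mul_swap {i : Fin a} (hi : (i : ℕ) + 1 < a) :
    (simpleReflection i).1 =
      Equiv.swap (.inl i) (next i) * Equiv.swap (.inr i) (next i).swap := by
  rw [simpleReflection, dif_pos hi, next_of_lt hi, Sum.swap_inl,
    ← Equiv.Perm.sumCongr_swap_one, ← Equiv.Perm.sumCongr_one_swap, Equiv.Perm.sumCongr_mul,
    mul_one, one_mul]

lemma simpleReflection_eq_swap {i : Fin a} (hi : ¬(i : ℕ) + 1 < a) :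
    (simpleReflection i).1 = Equiv.swap (.inl i) (next i) := by
  rw [simpleReflection, dif_neg hi, next_of_not_lt hi]

end WeylGroup

section Descent

variable {a : ℕ}

lemma height_le (p : Index a) : height p ≤ a := by
  rcases p with j | j <;> simp
  omega

theorem eq_longest_of_not_ascent (π : weylGroup a)
    (h : ∀ i, ¬height (π.1 (.inl i)) < height (π.1 (next i))) : π = longest a := by
  have hlt (i : Fin a) : height (π.1 (next i)) < height (π.1 (.inl i)) :=
    (not_lt.1 (h i)).lt_of_ne fun he => next_ne_inl i (π.1.injective (height_injective he))
  refine weylGroup_ext fun j => height_injective ?_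
  obtain _ | n := a
  · exact j.elim0
  have hanti : Antitone fun j : Fin (n + 1) => height (π.1 (.inl j)) + j := by
    refine Fin.antitone_iff_succ_le.2 fun i => ?_
    have hi := hlt i.castSucc
    rw [next_of_lt (by simp)] at hi
    change height (π.1 (.inl i.succ)) < _ at hi
    simp only [Fin.val_succ, Fin.val_castSucc]
    push_cast
    omega
  have hlast := hlt (Fin.last n)
  rw [next_of_not_lt (by simp), weylGroup_apply_inr, Weight.map_swap] at hlast
  have h0 := (hanti (Fin.zero_le j)).trans (add_le_add_left (height_le _) _)
  have h1 := hanti (Fin.le_last j)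
  simp only [Fin.val_zero, Fin.val_last] at h0 h1
  simp only [longest_apply, Sum.swap_inl, height_inr]
  push_cast at h0 ⊢
  omega

/-- A statistic that decreases as a Weyl group element approaches the longest one. -/
def heightPairing (π : weylGroup a) : ℤ := ∑ j : Fin a, height (.inl j) * height (π.1 (.inl j))

lemma heightPairing_mul_simpleReflection_lt {π : weylGroup a} {i : Fin a}
    (h : height (π.1 (.inl i)) < height (π.1 (next i))) :
    heightPairing (π * simpleReflection i) < heightPairing π := by
  rw [← sub_neg]
  by_cases hi : (i : ℕ) + 1 < a
  · let σ : Equiv.Perm (Fin a) := Equiv.swap i ⟨i + 1, hi⟩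
    have hσ : heightPairing (π * simpleReflection i) =
        ∑ j, height (.inl (σ j)) * height (π.1 (.inl j)) := by
      refine Fintype.sum_equiv σ _ _ fun j => ?_
      rw [Subgroup.coe_mul, Equiv.Perm.mul_apply, simpleReflection_inl_of_lt hi]
      simp [σ]
    have hne : i ≠ ⟨i + 1, hi⟩ := fun h => by simpa using congrArg Fin.val h
    rw [hσ, heightPairing, ← Finset.sum_sub_distrib, Fintype.sum_eq_add i ⟨i + 1, hi⟩ hne]
    · rw [next_of_lt hi] at h
      simp [σ]
      linarith
    · intro j hj
      rw [Equiv.swap_apply_of_ne_of_ne hj.1 hj.2, sub_self]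
  · rw [heightPairing, heightPairing, ← Finset.sum_sub_distrib, Fintype.sum_eq_single i]
    · rw [next_of_not_lt hi, weylGroup_apply_inr, Weight.map_swap] at h
      rw [Subgroup.coe_mul, Equiv.Perm.mul_apply, simpleReflection_inl_of_not_lt hi, if_pos rfl,
        weylGroup_apply_inr, Weight.map_swap, height_inl, show (i : ℤ) - a = -1 by omega]
      linarith
    · intro j hj
      rw [Subgroup.coe_mul, Equiv.Perm.mul_apply, simpleReflection_inl_of_not_lt hi, if_neg hj,
        sub_self]

@[elab_as_elim]
theorem weylGroup_induction {P : weylGroup a → Prop} (longest : P (longest a))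
    (ascent : ∀ π i, height (π.1 (.inl i)) < height (π.1 (next i)) →
      P (π * simpleReflection i) → P π) (π : weylGroup a) : P π := by
  by_contra hπ
  obtain ⟨σ, hσ, hmin⟩ := Set.exists_min_image {σ | ¬P σ} heightPairing (Set.toFinite _) ⟨π, hπ⟩
  by_cases h : ∃ i, height (σ.1 (.inl i)) < height (σ.1 (next i))
  · obtain ⟨i, hi⟩ := h
    exact (hmin _ fun hP => hσ (ascent σ i hi hP)).not_gt (heightPairing_mul_simpleReflection_lt hi)
  · exact hσ (eq_longest_of_not_ascent σ (not_exists.1 h) ▸ longest)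

end Descent

section Signature

variable {a : ℕ}

/-- The coordinates of `eᵢ ↦ eᵢ`, `fᵢ ↦ -eᵢ`, through which the Weyl group acts on `ℤᵃ`. -/
def signedBasis : Index a → Fin a → ℤ
  | .inl i => Pi.single i 1
  | .inr i => -Pi.single i 1

lemma signedBasis_swap (p : Index a) : signedBasis p.swap = -signedBasis p := by
  cases p <;> simp [signedBasis]

/-- The sign character of the Weyl group: the determinant of a signed permutation matrix. -/
def signature (π : weylGroup a) : ℤ := det (of fun j => signedBasis (π.1 (.inl j)))

lemma signature_mul_simpleReflection (π : weylGroup a) (i : Fin a) :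
    signature (π * simpleReflection i) = -signature π := by
  unfold signature
  by_cases hi : (i : ℕ) + 1 < a
  · have hne : i ≠ ⟨i + 1, hi⟩ := fun h => by simpa using congrArg Fin.val h
    have hdet := det_permute (Equiv.swap i ⟨i + 1, hi⟩) (of fun j => signedBasis (π.1 (.inl j)))
    rw [Equiv.Perm.sign_swap hne] at hdet
    rw [← neg_one_mul]
    refine Eq.trans (congrArg det ?_) hdet
    ext j x
    simp [simpleReflection_inl_of_lt hi]
  · have hdet := det_updateRow_smul (of fun j => signedBasis (π.1 (.inl j))) i (-1)
      (signedBasis (π.1 (.inl i)))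
    rw [show signedBasis (π.1 (.inl i)) = of (fun j => signedBasis (π.1 (.inl j))) i from rfl,
      updateRow_eq_self, neg_one_mul] at hdet
    refine Eq.trans (congrArg det ?_) hdet
    ext j x
    rw [updateRow_apply]
    split_ifs with h
    · subst h
      simp [simpleReflection_inl_of_not_lt hi, weylGroup_apply_inr, signedBasis_swap]
    · simp [simpleReflection_inl_of_not_lt hi, h]

lemma signature_longest_ne_zero : signature (longest a) ≠ 0 := by
  have h : (of fun j => signedBasis ((longest a).1 (.inl j))) = -1 := by
    ext j x
    simp [signedBasis, Pi.single_apply, Matrix.one_apply, eq_comm]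
  rw [signature, h, det_neg]
  simp

end Signature

section Monomial

variable {a : ℕ} {F : Type*} [Field F] {π σ : weylGroup a} {g h : Sp a F}

/-- The elements of the torus coset of `π` in the normalizer of the diagonal torus. -/
def IsMonomial (π : weylGroup a) (g : Sp a F) : Prop := ∀ p q, p ≠ π.1 q → g.1 p q = 0

lemma IsMonomial.mul (hg : IsMonomial π g) (hh : IsMonomial σ h) : IsMonomial (π * σ) (g * h) := by
  intro p q hpq
  rw [Submonoid.coe_mul, Matrix.mul_apply]
  refine Finset.sum_eq_zero fun r _ => ?_
  by_cases hr : r = σ.1 q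
  · subst hr
    rw [hg p _ hpq, zero_mul]
  · rw [hh r q hr, mul_zero]

lemma IsMonomial.inv (hg : IsMonomial π g) : IsMonomial π⁻¹ g⁻¹ := by
  intro p q hpq
  rw [inv_apply_eq_zero_iff]
  refine hg _ _ fun h => hpq ?_
  rw [weylGroup_apply_swap] at h
  exact (Equiv.Perm.eq_inv_iff_eq.2 (Sum.swap_leftInverse.injective h).symm)

lemma IsMonomial.mem_borel (hg : IsMonomial 1 g) : g ∈ borel a F := fun p q hpq =>
  hg p q fun h => hpq.ne (congrArg height h.symm)

lemma isMonomial_symJ : IsMonomial (longest a) (SymplecticGroup.symJ (Fin a) F) := by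
  intro p q hpq
  rw [SymplecticGroup.coe_J, J_apply, if_neg]
  rintro rfl
  simp at hpq

lemma embed_rotation_apply_eq_zero {p : Fin 2 → Index a} (hp : Function.Injective p)
    {x y : Index a} (h : x ≠ Equiv.swap (p 0) (p 1) y) :
    embed p (!![0, 1; -1, 0] : Matrix (Fin 2) (Fin 2) F) x y = 0 := by
  have hrow (k : Fin 2) : embed p (!![0, 1; -1, 0] : Matrix (Fin 2) (Fin 2) F) (p k) y =
      ((!![0, 1; -1, 0] : Matrix (Fin 2) (Fin 2) F) * (incl F p)ᵀ) k y := by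
    rw [← incl_transpose_mul_embed hp, incl_transpose_mul]
    rfl
  by_cases hx : ∃ k, p k = x
  · obtain ⟨k, rfl⟩ := hx
    rw [hrow]
    have hy (l : Fin 2) (hl : Equiv.swap (p 0) (p 1) (p l) = p k) : incl F p y l = 0 :=
      incl_apply_of_ne fun hyl => h (by rw [hyl, hl])
    fin_cases k
    · simpa [Matrix.mul_apply] using hy 1 (Equiv.swap_apply_right _ _)
    · simpa [Matrix.mul_apply] using hy 0 (Equiv.swap_apply_left _ _)
  · have hxp (k : Fin 2) : x ≠ p k := fun hk => hx ⟨k, hk.symm⟩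
    rw [embed_apply_eq_one_apply fun k _ hk _ => absurd hk.symm (hxp k), Matrix.one_apply_ne]
    rintro rfl
    exact h (Equiv.swap_apply_of_ne_of_ne (hxp 0) (hxp 1)).symm

lemma isMonomial_reflection (i : Fin a) : IsMonomial (simpleReflection i) (reflection F i) := by
  have hdual : ((!![0, 1; -1, 0] : Matrix (Fin 2) (Fin 2) F)⁻¹)ᵀ = !![0, 1; -1, 0] := by
    ext k l
    fin_cases k <;> fin_cases l <;> simp [inv_def, adjugate_fin_two]
  intro p q hpq
  change leviMatrix i _ p q = 0
  unfold leviMatrix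
  split_ifs with hi
  · rw [simpleReflection_eq_swap_mul_swap hi] at hpq
    rw [hdual, Matrix.mul_apply]
    refine Finset.sum_eq_zero fun r _ => ?_
    by_cases hr : r = Equiv.swap (.inr i) (next i).swap q
    · rw [embed_rotation_apply_eq_zero (pair_injective i), zero_mul]
      rw [hr]
      exact hpq
    · rw [embed_rotation_apply_eq_zero (swap_comp_pair_injective i) hr, mul_zero]
  · rw [simpleReflection_eq_swap hi] at hpq
    exact embed_rotation_apply_eq_zero (pair_injective i) hpq

lemma exists_isMonomial (F : Type*) [Field F] (π : weylGroup a) : ∃ g : Sp a F, IsMonomial π g := by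
  induction π using weylGroup_induction with
  | longest => exact ⟨_, isMonomial_symJ⟩
  | ascent π i _ h =>
    obtain ⟨g, hg⟩ := h
    have := hg.mul (isMonomial_reflection i).inv
    exact ⟨_, by rwa [mul_inv_cancel_right] at this⟩

/-- The weight `τ` transported along a Weyl group element. -/
def Weight.comp (τ : Weight a) (π : weylGroup a) : Weight a where
  toFun p := τ (π.1 p)
  map_swap' p := by rw [weylGroup_apply_swap, τ.map_swap]

lemma IsMonomial.conj_mem_radical {τ : Weight a} (hg : IsMonomial π g)
    (hh : h ∈ radical F (τ.comp π)) : g * h * g⁻¹ ∈ radical F τ := by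
  have key : (g * h * g⁻¹).1 - 1 = g.1 * (h.1 - 1) * (g⁻¹).1 := by
    rw [mul_sub, sub_mul, mul_one, coe_mul_coe_inv]; rfl
  intro p q hpq
  rw [key, Matrix.mul_apply]
  refine Finset.sum_eq_zero fun s _ => ?_
  by_cases hs : q = π.1 s
  · rw [Matrix.mul_apply, Finset.sum_mul]
    refine Finset.sum_eq_zero fun r _ => ?_
    by_cases hr : p = π.1 r
    · rw [hh (show τ (π.1 s) ≤ τ (π.1 r) by rwa [← hs, ← hr]), mul_zero, zero_mul]
    · rw [hg p r hr, zero_mul, zero_mul]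
  · rw [hg.inv s q, mul_zero]
    rintro rfl
    exact hs (π.1.apply_symm_apply q).symm

lemma IsMonomial.conj_rootElement_mem_unipotent {i : Fin a} (hg : IsMonomial π g)
    (hi : height (π.1 (.inl i)) < height (π.1 (next i))) (c : F) :
    g * rootElement i c * g⁻¹ ∈ unipotent a F :=
  hg.conj_mem_radical (rootElement_mem_radical hi c)

end Monomial

section Eichler

variable {a : ℕ} {F : Type*} [Field F]

/-- The symplectic form with Gram matrix `J`. -/
noncomputable def form (a : ℕ) (F : Type*) [Field F] : LinearMap.BilinForm F (Index a → F) :=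
  toBilin' (J (Fin a) F)

lemma mem_symplecticGroup_iff_form {M : Matrix (Index a) (Index a) F} :
    M ∈ symplecticGroup (Fin a) F ↔ ∀ x y, form a F (M *ᵥ x) (M *ᵥ y) = form a F x y := by
  rw [SymplecticGroup.mem_iff', ← toBilin'.injective.eq_iff, ← toBilin'_comp, LinearMap.ext_iff₂]
  rfl

lemma form_single (p : Index a) (c : F) (x : Index a → F) :
    form a F (Pi.single p c) x = -(c * sign F p * x p.swap) := by
  have hJ : (J (Fin a) F *ᵥ x) p = -sign F p * x p.swap :=
    J_mul_apply (fun q (_ : Unit) => x q) p ()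
  rw [form, toBilin'_apply', single_dotProduct, hJ]
  ring

lemma form_isAlt : (form a F).IsAlt := by
  intro x
  rw [form, toBilin'_apply', dotProduct, Fintype.sum_sum_type, ← Finset.sum_add_distrib]
  refine Finset.sum_eq_zero fun i _ => ?_
  simp [mulVec, dotProduct, J_apply]
  ring

/-- The Eichler transformation `x ↦ x + ω(w, x) v + (ω(v, x) + c ω(w, x)) w`, where `ω` is the
symplectic form. -/
noncomputable def eichlerMatrix (v w : Index a → F) (c : F) : Matrix (Index a) (Index a) F :=
  1 + (vecMulVec v (w ᵥ* J (Fin a) F) + vecMulVec w (v ᵥ* J (Fin a) F + c • w ᵥ* J (Fin a) F))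

lemma eichlerMatrix_mulVec (v w : Index a → F) (c : F) (x : Index a → F) :
    eichlerMatrix v w c *ᵥ x =
      x + (form a F w x • v + (form a F v x + c * form a F w x) • w) := by
  simp only [eichlerMatrix, add_mulVec, one_mulVec, vecMulVec_mulVec, op_smul_eq_smul,
    add_dotProduct, smul_dotProduct, smul_eq_mul, form, toBilin'_apply', dotProduct_mulVec]

lemma eichlerMatrix_mem {v w : Index a → F} (h : form a F v w = 0) (c : F) :
    eichlerMatrix v w c ∈ symplecticGroup (Fin a) F := by
  rw [mem_symplecticGroup_iff_form]
  intro x y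
  have hwv : form a F w v = 0 := form_isAlt.isRefl v w h
  simp only [eichlerMatrix_mulVec, map_add, map_smul, LinearMap.add_apply, LinearMap.smul_apply,
    smul_eq_mul, h, hwv, form_isAlt.self_eq_zero, ← form_isAlt.neg_eq x]
  ring

/-- The Eichler transformation as an element of `Sp a F`. -/
noncomputable def eichler (v w : Index a → F) (c : F) (h : form a F v w = 0) : Sp a F :=
  ⟨eichlerMatrix v w c, eichlerMatrix_mem h c⟩

lemma eichler_mem_radical {τ : Weight a} {v w : Index a → F} {c : F} (h : form a F v w = 0)
    (hvw : ∀ p q, v p ≠ 0 → w q ≠ 0 → τ p + τ q < 0)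
    (hww : c ≠ 0 → ∀ p q, w p ≠ 0 → w q ≠ 0 → τ p + τ q < 0) :
    eichler v w c h ∈ radical F τ := by
  intro p q hpq
  have hJ (x : Index a → F) : (x ᵥ* J (Fin a) F) q = sign F q * x q.swap :=
    mul_J_apply (fun _ => x) q q
  have hτ := τ.map_swap q
  have h1 : v p * w q.swap = 0 := by
    by_contra hne
    have := hvw p q.swap (left_ne_zero_of_mul hne) (right_ne_zero_of_mul hne)
    omega
  have h2 : w p * v q.swap = 0 := by
    by_contra hne
    have := hvw q.swap p (right_ne_zero_of_mul hne) (left_ne_zero_of_mul hne)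
    omega
  have h3 : c * (w p * w q.swap) = 0 := by
    by_contra hne
    have hw := right_ne_zero_of_mul hne
    have := hww (left_ne_zero_of_mul hne) p q.swap (left_ne_zero_of_mul hw)
      (right_ne_zero_of_mul hw)
    omega
  simp only [eichler, eichlerMatrix, add_sub_cancel_left, Matrix.add_apply, vecMulVec_apply,
    Pi.add_apply, Pi.smul_apply, smul_eq_mul, hJ]
  linear_combination sign F q * (h1 + h2 + h3)

lemma form_single_swap (t : Index a) (z : Index a → F) :
    form a F (Pi.single t.swap 1) z = sign F t * z t := by
  simp [form_single]

lemma eichler_single_mem_unipotent {t : Index a} {v : Index a → F} {c : F}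
    (h : form a F v (Pi.single t.swap 1) = 0) (hv : ∀ p, v p ≠ 0 → height p < height t)
    (hc : c ≠ 0 → 0 < height t) : eichler v (Pi.single t.swap 1) c h ∈ unipotent a F := by
  have hw {q : Index a} (hq : (Pi.single t.swap 1 : Index a → F) q ≠ 0) :
      height q = -height t := by
    rw [← height.map_swap]
    by_contra hne
    exact hq (Pi.single_eq_of_ne (by rintro rfl; exact hne rfl) _)
  refine eichler_mem_radical h (fun p q hp hq => ?_) fun hc' p q hp hq => ?_
  · have := hv p hp
    have := hw hq
    omega
  · have := hc hc'
    have := hw hp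
    have := hw hq
    omega

end Eichler

section Elimination

variable {a : ℕ} {F : Type*} [Field F]

lemma exists_mem_unipotent_mulVec_eq_single {x : Index a → F} {t : Index a} (ht : x t ≠ 0)
    (hlt : ∀ p, x p ≠ 0 → p ≠ t → height p < height t) :
    ∃ u ∈ unipotent a F, u.1 *ᵥ x = Pi.single t (x t) ∧
      ∀ z, form a F x z = 0 → z t = 0 → z t.swap = 0 → u.1 *ᵥ z = z := by
  let s := sign F t * x t
  have hs : s ≠ 0 := mul_ne_zero (sign_ne_zero t) ht
  let y := x - Pi.single t (x t) - x t.swap • Pi.single t.swap 1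
  have hy (z : Index a → F) : form a F y z =
      form a F x z + sign F t * (x t * z t.swap - x t.swap * z t) := by
    simp only [y, map_sub, map_smul, LinearMap.sub_apply, LinearMap.smul_apply, form_single,
      sign_swap, Sum.swap_swap, smul_eq_mul]
    ring
  have hyt : y t = 0 := by simp [y, (swap_ne t).symm]
  have hys : y t.swap = 0 := by simp [y, swap_ne]
  have hyw : form a F (-s⁻¹ • y) (Pi.single t.swap 1) = 0 := by
    rw [form_isAlt.isRefl.eq_iff, map_smul, form_single_swap, hyt, mul_zero, smul_zero]
  refine ⟨eichler (-s⁻¹ • y) _ (-s⁻¹ * x t.swap) hyw,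
    eichler_single_mem_unipotent hyw (fun p hp => ?_) fun hc => ?_, ?_, fun z hz hzt hzs => ?_⟩
  · have hyp : y p ≠ 0 := fun h => hp (by simp [h])
    have hpt : p ≠ t := by rintro rfl; exact hyp hyt
    have hps : p ≠ t.swap := by rintro rfl; exact hyp hys
    exact hlt p (by simpa [y, hpt, hps] using hyp) hpt
  · have := hlt _ (right_ne_zero_of_mul hc) (swap_ne t)
    have := height.map_swap t
    omega
  · have hyx : form a F y x = 0 := by
      rw [hy, form_isAlt.self_eq_zero]
      ring
    have hcs : -s⁻¹ * x t.swap * s = -x t.swap := by field_simp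
    refine (eichlerMatrix_mulVec _ _ _ _).trans ?_
    rw [form_single_swap, map_smul, LinearMap.smul_apply, hyx, smul_zero, zero_add, smul_smul,
      hcs, mul_neg, mul_inv_cancel₀ hs]
    simp only [y]
    module
  · refine (eichlerMatrix_mulVec _ _ _ _).trans ?_
    simp [form_single_swap, hzt, hy, hz, hzs]

lemma exists_mem_unipotent_col_eq_single_add {K : Fin a} {r : Fin a → F}
    (hr : ∀ j, r j ≠ 0 → j < K) : ∃ u ∈ unipotent a F,
      (∀ j ≠ K, u.1.col (.inl j) = Pi.single (.inl j) 1) ∧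
        u.1.col (.inl K) = Pi.single (.inl K) 1 + Sum.elim r 0 := by
  have hv (j : Fin a) : form a F (Sum.elim r 0) (Pi.single (.inl j) 1) = 0 := by
    rw [form_isAlt.isRefl.eq_iff, form_single]
    simp
  have hw : form a F (Sum.elim r 0) (Pi.single (Sum.inl K : Index a).swap 1) = 0 := by
    rw [form_isAlt.isRefl.eq_iff, form_single_swap]
    simpa using mt (hr K) (lt_irrefl K)
  have hu (j : Fin a) : (eichler (Sum.elim r 0) _ 0 hw).1.col (.inl j) = Pi.single (.inl j) 1 +
      (Pi.single (.inl j) 1 : Index a → F) (.inl K) • Sum.elim r 0 := by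
    rw [← mulVec_single_one]
    refine (eichlerMatrix_mulVec _ _ _ _).trans ?_
    rw [form_single_swap, hv]
    simp
  refine ⟨_, eichler_single_mem_unipotent hw ?_ (absurd rfl), fun j hj => ?_, ?_⟩
  · rintro (j | j) hj
    · simpa using hr j hj
    · exact absurd rfl hj
  · rw [hu, Pi.single_eq_of_ne (by simpa using hj.symm), zero_smul, add_zero]
  · rw [hu, Pi.single_eq_same, one_smul]

lemma form_col_col (g : Sp a F) (p q : Index a) :
    form a F (g.1.col p) (g.1.col q) = form a F (Pi.single p 1) (Pi.single q 1) := by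
  rw [← mulVec_single_one, ← mulVec_single_one, mem_symplecticGroup_iff_form.1 g.2]

lemma form_col_inl_col_inl (g : Sp a F) (i j : Fin a) :
    form a F (g.1.col (.inl i)) (g.1.col (.inl j)) = 0 := by
  simp [form_col_col, form_single]

lemma col_ne_zero (g : Sp a F) (q : Index a) : g.1.col q ≠ 0 := by
  intro h
  have := congrFun (congrArg ((g⁻¹).1 *ᵥ ·) h) q
  rw [← mulVec_single_one, mulVec_mulVec, coe_inv_mul_coe] at this
  simp at this

lemma col_mul (g h : Sp a F) (q : Index a) : (g * h).1.col q = g.1 *ᵥ h.1.col q := rfl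

/-- The first `k` columns of `g` are multiples of basis vectors, the `j`-th one of the basis vector
`p j`: the state of the Bruhat elimination after `k` steps. -/
def ColumnsReduced (g : Sp a F) (k : ℕ) (p : Fin a → Index a) : Prop :=
  ∀ j : Fin a, (j : ℕ) < k → g.1.col (.inl j) = Pi.single (p j) (g.1 (p j) (.inl j))

variable {g : Sp a F} {k : ℕ} {p : Fin a → Index a} {i j : Fin a}

lemma ColumnsReduced.apply_ne_zero (hg : ColumnsReduced g k p) (hj : (j : ℕ) < k) :
    g.1 (p j) (.inl j) ≠ 0 := fun h =>
  col_ne_zero g (.inl j) (by rw [hg j hj, h, Pi.single_zero])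

lemma ColumnsReduced.apply_swap_eq_zero (hg : ColumnsReduced g k p) (hj : (j : ℕ) < k)
    (i : Fin a) : g.1 (p j).swap (.inl i) = 0 := by
  have h := form_col_inl_col_inl g j i
  rw [hg j hj, form_single, neg_eq_zero] at h
  exact (mul_eq_zero.1 h).resolve_left (mul_ne_zero (hg.apply_ne_zero hj) (sign_ne_zero _))

lemma ColumnsReduced.injOn (hg : ColumnsReduced g k p) : Set.InjOn p {j | (j : ℕ) < k} := by
  intro i hi j hj hij
  by_contra hne
  have h : g.1 (p j) (.inl j) • g.1.col (.inl i) = g.1 (p i) (.inl i) • g.1.col (.inl j) := by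
    rw [hg i hi, hg j hj, hij]
    simp [← Pi.single_smul, mul_comm]
  have h' := congrFun (congrArg ((g⁻¹).1 *ᵥ ·) h) (.inl i)
  simp only [mulVec_smul, ← mulVec_single_one, mulVec_mulVec, coe_inv_mul_coe] at h'
  exact hg.apply_ne_zero hj (by simpa [hne] using h')

lemma ColumnsReduced.ne_swap (hg : ColumnsReduced g k p) (hi : (i : ℕ) < k) (hj : (j : ℕ) < k) :
    p i ≠ (p j).swap := fun h => hg.apply_ne_zero hi (h ▸ hg.apply_swap_eq_zero hj i)

lemma ColumnsReduced.exists_mul_right {K : Fin a} (hg : ColumnsReduced g K p) :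
    ∃ u ∈ unipotent a F, ColumnsReduced (g * u) K p ∧
      ∀ j : Fin a, j < K → (g * u).1 (p j) (.inl K) = 0 := by
  let r (j : Fin a) : F := if j < K then -(g.1 (p j) (.inl K) / g.1 (p j) (.inl j)) else 0
  obtain ⟨u, hu, hu_ne, hu_self⟩ := exists_mem_unipotent_col_eq_single_add (r := r) (K := K)
    fun j hj => by_contra fun h => hj (if_neg h)
  refine ⟨u, hu, fun j hj => ?_, fun j hj => ?_⟩
  · have hcol : (g * u).1.col (.inl j) = g.1.col (.inl j) := by
      rw [col_mul, hu_ne j (Fin.ne_of_lt hj), mulVec_single_one]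
    have hentry : (g * u).1 (p j) (.inl j) = g.1 (p j) (.inl j) := congrFun hcol (p j)
    rw [hcol, hentry, hg j hj]
  · have hcol : (g * u).1.col (.inl K) = g.1.col (.inl K) + g.1 *ᵥ Sum.elim r 0 := by
      rw [col_mul, hu_self, mulVec_add, mulVec_single_one]
    have hsum : (g.1 *ᵥ Sum.elim r 0) (p j) = g.1 (p j) (.inl j) * r j := by
      rw [mulVec, dotProduct, Fintype.sum_sum_type, Finset.sum_eq_single j]
      · simp
      · intro i _ hij
        by_cases hi : i < K
        · have h : g.1 (p j) (.inl i) = _ := congrFun (hg i hi) (p j)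
          rw [h, Pi.single_eq_of_ne (hg.injOn.ne hj hi hij.symm), zero_mul]
        · simp [r, hi]
      · simp
    refine (congrFun hcol (p j)).trans ?_
    rw [Pi.add_apply, hsum]
    simp [r, hj, mul_div_cancel₀ _ (hg.apply_ne_zero hj)]

lemma ColumnsReduced.exists_mul_left {K : Fin a} (hg : ColumnsReduced g K p)
    (h : ∀ j : Fin a, j < K → g.1 (p j) (.inl K) = 0) :
    ∃ u ∈ unipotent a F, ∃ t, ColumnsReduced (u * g) (K + 1) (Function.update p K t) := by
  obtain ⟨t, ht, hmax⟩ := Set.exists_max_image {q | g.1.col (.inl K) q ≠ 0} height (Set.toFinite _)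
    (Function.ne_iff.1 (col_ne_zero g (.inl K)))
  obtain ⟨u, hu, hut, hu_fix⟩ := exists_mem_unipotent_mulVec_eq_single ht
    fun q hq hqt => (hmax q hq).lt_of_ne (height_injective.ne hqt)
  refine ⟨u, hu, t, fun j hj => ?_⟩
  have hcol : (u * g).1.col (.inl j) = Pi.single (Function.update p K t j)
      (g.1 (Function.update p K t j) (.inl j)) := by
    rcases (Nat.lt_succ_iff.1 hj).lt_or_eq with hjK | hjK
    · have hpt : t ≠ p j := fun e => ht (by rw [e]; exact h j hjK)
      have hps : t ≠ (p j).swap := fun e => ht (by rw [e]; exact hg.apply_swap_eq_zero hjK K)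
      rw [col_mul, hu_fix _ (form_col_inl_col_inl g K j), Function.update_of_ne (Fin.ne_of_lt hjK),
        hg j hjK]
      · rw [hg j hjK, Pi.single_eq_of_ne hpt]
      · rw [hg j hjK, Pi.single_eq_of_ne]
        rintro e
        exact hps (by rw [← e, Sum.swap_swap])
    · obtain rfl := Fin.ext hjK
      rw [Function.update_self]
      exact hut
  have hentry := congrFun hcol (Function.update p K t j)
  rw [Pi.single_eq_same] at hentry
  exact hcol.trans (congrArg _ hentry.symm)

lemma exists_columnsReduced (g : Sp a F) {k : ℕ} (hk : k ≤ a) :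
    ∃ u ∈ unipotent a F, ∃ u' ∈ unipotent a F, ∃ p, ColumnsReduced (u * g * u') k p := by
  induction k with
  | zero => exact ⟨1, one_mem _, 1, one_mem _, Sum.inl, fun _ h => absurd h (Nat.not_lt_zero _)⟩
  | succ k ih =>
    obtain ⟨u, hu, u', hu', p, hp⟩ := ih (Nat.le_of_succ_le hk)
    obtain ⟨v', hv', hp', hrow⟩ := hp.exists_mul_right (K := ⟨k, hk⟩)
    obtain ⟨v, hv, t, ht⟩ := hp'.exists_mul_left hrow
    exact ⟨v * u, mul_mem hv hu, u' * v', mul_mem hu' hv', _, by simpa [mul_assoc] using ht⟩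

lemma ColumnsReduced.exists_weylGroup (hg : ColumnsReduced g a p) :
    ∃ π : weylGroup a, ∀ j, π.1 (.inl j) = p j := by
  let f : Index a → Index a := Sum.elim p (Sum.swap ∘ p)
  have hf : Function.Injective f := by
    rintro (i | i) (j | j) h
    · exact congrArg _ (hg.injOn i.2 j.2 h)
    · exact absurd h (hg.ne_swap i.2 j.2)
    · exact absurd h.symm (hg.ne_swap j.2 i.2)
    · exact congrArg _ (hg.injOn i.2 j.2 (Sum.swap_leftInverse.injective h))
  refine ⟨⟨Equiv.ofBijective f hf.bijective_of_finite, mem_weylGroup.2 ?_⟩, fun _ => rfl⟩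
  rintro (j | j)
  · rfl
  · exact (Sum.swap_swap (p j)).symm

lemma ColumnsReduced.mem_borel (hg : ColumnsReduced g a Sum.inl) : g ∈ borel a F := by
  rintro (i | i) (j | j) h
  · refine (congrFun (hg j j.2) _).trans (Pi.single_eq_of_ne ?_ _)
    exact fun e => h.ne (congrArg height e.symm)
  · simp at h
    omega
  · exact (congrFun (hg j j.2) _).trans (Pi.single_eq_of_ne (by simp) _)
  · have hij := form_col_col g (.inl i) (.inr j)
    rw [hg i i.2, form_single, form_single, Pi.single_eq_of_ne, neg_inj] at hij
    · simpa [hg.apply_ne_zero i.2] using hij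
    · rintro e
      obtain rfl : i = j := by simpa using e
      exact h.false

end Elimination

section Bruhat

variable {a : ℕ} {F : Type*} [Field F]

lemma apply_swap_swap_of_mem_borel {b : Sp a F} (hb : b ∈ borel a F) (p : Index a) :
    b.1 p.swap p.swap = (b.1 p p)⁻¹ := by
  have h := mul_apply_self_of_mem_borel hb (inv_mem hb) p
  rw [mul_inv_cancel, inv_apply, sign_mul_self, one_mul, OneMemClass.coe_one,
    Matrix.one_apply_eq] at h
  exact eq_inv_of_mul_eq_one_right h.symm

lemma exists_torus_mul_of_mem_borel {b : Sp a F} (hb : b ∈ borel a F) :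
    ∃ d, ∃ u ∈ unipotent a F, b = torus a F d * u := by
  let d (i : Fin a) : Fˣ := Units.mk0 (b.1 (.inl i) (.inl i)) (apply_self_ne_zero_of_mem_borel hb _)
  have hd (p : Index a) : (torus a F d).1 p p = b.1 p p := by
    rw [coe_torus, diagonal_apply_eq]
    rcases p with i | i
    · rfl
    · exact (Units.val_inv_eq_inv_val _).trans (apply_swap_swap_of_mem_borel hb (.inl i)).symm
  have hu := mul_mem (inv_mem (torus_mem_borel d)) hb
  refine ⟨d, (torus a F d)⁻¹ * b, mem_unipotent_iff.2 ⟨hu, fun p => ?_⟩, by simp⟩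
  have h := mul_apply_self_of_mem_borel (torus_mem_borel d) hu p
  rw [mul_inv_cancel_left, hd] at h
  exact (mul_eq_left₀ (apply_self_ne_zero_of_mem_borel hb p)).1 h.symm

lemma isMonomial_torus (d : Fin a → Fˣ) : IsMonomial 1 (torus a F d) :=
  fun _ _ h => diagonal_apply_ne _ h

theorem bruhat_decomposition (g : Sp a F) :
    ∃ u ∈ unipotent a F, ∃ u' ∈ unipotent a F, ∃ π m, IsMonomial π m ∧ g = u * m * u' := by
  obtain ⟨v, hv, v', hv', p, hp⟩ := exists_columnsReduced g le_rfl
  obtain ⟨π, hπ⟩ := hp.exists_weylGroup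
  obtain ⟨m, hm⟩ := exists_isMonomial F π
  have hb : m⁻¹ * (v * g * v') ∈ borel a F := by
    refine ColumnsReduced.mem_borel fun j _ => funext fun q => ?_
    by_cases hq : q = .inl j
    · rw [hq, Pi.single_eq_same]
      rfl
    · have hmq : (m⁻¹).1 q (p j) = 0 := hm.inv q (p j) <| by
        rw [← hπ]
        exact fun e => hq (e.trans (π.1.symm_apply_apply _))
      rw [col_mul, hp j j.2, Pi.single_eq_of_ne hq, mulVec_single]
      simp [hmq]
  obtain ⟨d, u, hu, hdu⟩ := exists_torus_mul_of_mem_borel hb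
  refine ⟨v⁻¹, inv_mem hv, u * v'⁻¹, mul_mem hu (inv_mem hv'), π, m * torus a F d, ?_, ?_⟩
  · simpa using hm.mul (isMonomial_torus d)
  · calc g = v⁻¹ * (m * (m⁻¹ * (v * g * v'))) * v'⁻¹ := by group
      _ = _ := by rw [hdu]; group

end Bruhat

section CosetSum

open DefectZero SymplecticGroup

variable {a ℓ : ℕ} [Fact ℓ.Prime] {F k : Type*} [Field F] [Finite F] [CharP F ℓ]
  [Semiring k] [CharP k ℓ] {f : Sp a F → k} {π : weylGroup a} {m : Sp a F}

lemma cosetSum_unipotent_eq_zero_of_isMonomial (hf : IsDefectZeroClassFunction ℓ f)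
    (hm : IsMonomial π m) (hπ : π ≠ longest a) : cosetSum (unipotent a F) f m = 0 := by
  obtain ⟨i, hi⟩ : ∃ i, height (π.1 (.inl i)) < height (π.1 (next i)) := by
    by_contra! h
    exact hπ (eq_longest_of_not_ascent π fun i => (h i).not_gt)
  have hd := hm.conj_rootElement_mem_unipotent hi 1
  refine cosetSum_eq_zero hf (d := m * rootElement i 1 * m⁻¹) (fun h => ?_) ?_
    (conj_mem_radical_iff (radical_le_parabolic _ hd)) ?_
  · exact rootElement_one_ne_one i (by simpa using h)
  · rw [conj_pow, rootElement_pow, CharP.cast_eq_zero, zero_mul, rootElement_zero, mul_one,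
      mul_inv_cancel]
  · have h := mul_mem (rootElement_mem_unipotent i 1) (inv_mem hd)
    simpa [mul_assoc] using h

lemma cosetSum_unipotent_of_isMonomial_longest (hf : IsDefectZeroClassFunction ℓ f)
    (hm : IsMonomial (longest a) m) :
    cosetSum (unipotent a F) f m = cosetSum (unipotent a F) f (symJ (Fin a) F) := by
  have hb := isMonomial_symJ.inv.mul hm
  rw [inv_mul_cancel] at hb
  obtain ⟨d, u, hu, hdu⟩ := exists_torus_mul_of_mem_borel hb.mem_borel
  rw [inv_mul_eq_iff_eq_mul.1 hdu, ← mul_assoc, cosetSum_mul_right _ _ hu,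
    cosetSum_unipotent_symJ_mul_torus hf]

open scoped Classical in
lemma cosetSum_unipotent_eq_ite (hf : IsDefectZeroClassFunction ℓ f) (hm : IsMonomial π m)
    {u u' : Sp a F} (hu : u ∈ unipotent a F) (hu' : u' ∈ unipotent a F) :
    cosetSum (unipotent a F) f (u * m * u') =
      if π = longest a then cosetSum (unipotent a F) f (symJ (Fin a) F) else 0 := by
  rw [cosetSum_mul_right _ _ hu', cosetSum_mul_left hf.conj _ hu]
  split_ifs with h
  · exact cosetSum_unipotent_of_isMonomial_longest hf (h ▸ hm)
  · exact cosetSum_unipotent_eq_zero_of_isMonomial hf hm h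

theorem cosetSum_unipotent_mul_comm {k : Type*} [CommSemiring k] [CharP k ℓ] {f₁ f₂ : Sp a F → k}
    (h₁ : IsDefectZeroClassFunction ℓ f₁) (h₂ : IsDefectZeroClassFunction ℓ f₂) (g g' : Sp a F) :
    cosetSum (unipotent a F) f₁ g * cosetSum (unipotent a F) f₂ g' =
      cosetSum (unipotent a F) f₁ g' * cosetSum (unipotent a F) f₂ g := by
  obtain ⟨u, hu, u', hu', π, m, hm, rfl⟩ := bruhat_decomposition g
  obtain ⟨v, hv, v', hv', σ, n, hn, rfl⟩ := bruhat_decomposition g'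
  rw [cosetSum_unipotent_eq_ite h₁ hm hu hu', cosetSum_unipotent_eq_ite h₂ hm hu hu',
    cosetSum_unipotent_eq_ite h₁ hn hv hv', cosetSum_unipotent_eq_ite h₂ hn hv hv']
  split_ifs <;> simp

end CosetSum

section Nilpotent

variable {m R : Type*} [Fintype m] [DecidableEq m] [Ring R]

lemma StrictBlockTriangular.pow_apply_eq_zero {M : Matrix m m R} {b : m → ℤ}
    (hM : StrictBlockTriangular M b) {n : ℕ} {p q : m} (h : b q < b p + n) : (M ^ n) p q = 0 := by
  induction n generalizing q with
  | zero =>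
    rw [pow_zero, Matrix.one_apply_ne]
    rintro rfl
    simp at h
  | succ n ih =>
    rw [pow_succ, Matrix.mul_apply]
    refine Finset.sum_eq_zero fun r _ => ?_
    rcases lt_or_ge (b r) (b p + n) with hr | hr
    · rw [ih hr, zero_mul]
    · rw [hM (by push_cast at h; omega), mul_zero]

end Nilpotent

section Sylow

variable {a : ℕ} {F : Type*} [Field F]

lemma isPGroup_unipotent (ℓ : ℕ) [Fact ℓ.Prime] [CharP F ℓ] : IsPGroup ℓ (unipotent a F) := by
  rintro ⟨u, hu⟩
  refine ⟨2 * a + 1, Subtype.ext (Subtype.ext ?_)⟩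
  change u.1 ^ ℓ ^ (2 * a + 1) = 1
  cases isEmpty_or_nonempty (Index a)
  · exact Subsingleton.elim _ _
  have : ExpChar (Matrix (Index a) (Index a) F) ℓ := .prime Fact.out
  have hnil : (u.1 - 1) ^ ℓ ^ (2 * a + 1) = 0 := by
    ext p q
    refine hu.pow_apply_eq_zero ?_
    have hlt : ((2 * a + 1 : ℕ) : ℤ) < (ℓ ^ (2 * a + 1) : ℕ) :=
      Int.ofNat_lt.2 (Nat.lt_pow_self (Fact.out : ℓ.Prime).one_lt)
    have := height_le p.swap
    have := height.map_swap p
    have := height_le q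
    omega
  rw [← sub_add_cancel u.1 1, add_pow_expChar_pow_of_commute _ _ (Commute.one_right _), hnil,
    zero_add, one_pow]

lemma eq_one_of_ascent {π : weylGroup a}
    (h : ∀ i, ¬height (π.1 (next i)) < height (π.1 (.inl i))) : π = 1 := by
  have := eq_longest_of_not_ascent (longest a * π) fun i => by
    simpa [Weight.map_swap] using h i
  simpa using this

lemma eq_one_of_mem_radical_of_mem_radical_longest {u : Sp a F} (hu : u ∈ unipotent a F)
    (hu' : u ∈ radical F (height.comp (longest a))) : u = 1 := by
  refine Subtype.ext (sub_eq_zero.1 (Matrix.ext fun p q => ?_))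
  rcases le_total (height q) (height p) with h | h
  · exact hu h
  · refine hu' ?_
    change height q.swap ≤ height p.swap
    rw [height.map_swap, height.map_swap]
    omega

lemma IsMonomial.eq_one_of_mem_normalizer {π : weylGroup a} {m : Sp a F} (hm : IsMonomial π m)
    (hn : m ∈ Subgroup.normalizer (unipotent a F : Set (Sp a F))) : π = 1 := by
  refine eq_one_of_ascent fun i hi => ?_
  have hmem : m * rootElement i 1 * m⁻¹ ∈ unipotent a F :=
    (Subgroup.mem_normalizer_iff.1 hn _).1 (rootElement_mem_unipotent i 1)
  have hmem' : m * rootElement i 1 * m⁻¹ ∈ radical F (height.comp (longest a)) := by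
    refine hm.conj_mem_radical (rootElement_mem_radical ?_ 1)
    change height (π.1 (.inl i)).swap < height (π.1 (next i)).swap
    rw [height.map_swap, height.map_swap]
    omega
  have h1 := eq_one_of_mem_radical_of_mem_radical_longest hmem hmem'
  exact rootElement_one_ne_one i (by simpa using h1)

lemma normalizer_unipotent (a : ℕ) (F : Type*) [Field F] :
    Subgroup.normalizer (unipotent a F : Set (Sp a F)) = borel a F := by
  refine le_antisymm (fun g hg => ?_) fun g hg => Subgroup.mem_normalizer_iff.2 fun u =>
    (conj_mem_radical_iff hg u).symm
  obtain ⟨u, hu, u', hu', π, m, hm, rfl⟩ := bruhat_decomposition g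
  have hle := Subgroup.le_normalizer (H := unipotent a F)
  have hmn : m ∈ Subgroup.normalizer (unipotent a F : Set (Sp a F)) := by
    rwa [Subgroup.mul_mem_cancel_right _ (hle hu'), Subgroup.mul_mem_cancel_left _ (hle hu)] at hg
  obtain rfl := hm.eq_one_of_mem_normalizer hmn
  exact mul_mem (mul_mem (radical_le_parabolic _ hu) hm.mem_borel) (radical_le_parabolic _ hu')

/-- The diagonal of an element of the Borel subgroup. -/
noncomputable def borelDiag (a : ℕ) (F : Type*) [Field F] : borel a F →* (Index a → Fˣ) where
  toFun b p := Units.mk0 (b.1.1 p p) (apply_self_ne_zero_of_mem_borel b.2 p)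
  map_one' := by ext p; simp
  map_mul' b c := by ext p; exact mul_apply_self_of_mem_borel b.2 c.2 p

lemma ker_borelDiag : (borelDiag a F).ker = (unipotent a F).subgroupOf (borel a F) := by
  ext b
  rw [MonoidHom.mem_ker, Subgroup.mem_subgroupOf, mem_unipotent_iff, and_iff_right b.2, funext_iff]
  exact forall_congr' fun p => Units.ext_iff

variable [Finite F]

lemma not_dvd_relIndex_borel (ℓ : ℕ) [Fact ℓ.Prime] [CharP F ℓ] :
    ¬ℓ ∣ (unipotent a F).relIndex (borel a F) := by
  have hℓ : ℓ.Prime := Fact.out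
  intro h
  rw [Subgroup.relIndex, ← ker_borelDiag, Subgroup.index_ker] at h
  have hunits : ℓ ∣ Nat.card Fˣ := by
    have := h.trans (Subgroup.card_subgroup_dvd_card (borelDiag a F).range)
    rw [Nat.card_fun] at this
    exact hℓ.dvd_of_dvd_pow this
  have hcard : ℓ ∣ Nat.card F := by
    have := Fintype.ofFinite F
    rw [Nat.card_eq_fintype_card, ← CharP.cast_eq_zero_iff F ℓ, Nat.cast_card_eq_zero]
  rw [Nat.card_units, Nat.dvd_sub_iff_right Nat.card_pos hcard] at hunits
  exact hℓ.not_dvd_one hunits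

theorem padicValNat_card_unipotent (ℓ : ℕ) [Fact ℓ.Prime] [CharP F ℓ] :
    padicValNat ℓ (Nat.card (unipotent a F)) = padicValNat ℓ (Nat.card (Sp a F)) := by
  obtain ⟨n, hn⟩ := (isPGroup_unipotent ℓ).exists_card_eq (G := unipotent a F)
  have hmod := Sylow.card_quotient_normalizer_modEq_card_quotient hn
  have hindex : ¬ℓ ∣ (unipotent a F).index := by
    intro h
    have hdvd : ℓ ∣ (unipotent a F).relIndex (Subgroup.normalizer (unipotent a F : Set (Sp a F))) :=
      (hmod.dvd_iff dvd_rfl).2 h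
    rw [normalizer_unipotent] at hdvd
    exact not_dvd_relIndex_borel ℓ hdvd
  rw [← Subgroup.card_mul_index (unipotent a F), padicValNat.mul Nat.card_pos.ne'
    Subgroup.index_ne_zero_of_finite, padicValNat.eq_zero_of_not_dvd hindex, add_zero]

end Sylow

open DefectZero SymplecticGroup

section SteinbergModule

/-- The action of a group on functions on it by left translation. -/
def leftTranslation (K G : Type*) [Field K] [Group G] : Representation K G (G → K) where
  toFun h := LinearMap.funLeft K K (h⁻¹ * ·)
  map_one' := by ext; simp
  map_mul' _ _ := by
    ext φ g
    simp [LinearMap.funLeft_apply, mul_assoc]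

@[simp]
lemma leftTranslation_apply {K G : Type*} [Field K] [Group G] (h : G) (φ : G → K) (g : G) :
    leftTranslation K G h φ g = φ (h⁻¹ * g) := rfl

variable {K : Type*} [Field K] {a : ℕ} {F : Type*} [Field F]

/-- The Steinberg module: the functions on `G / B`, for `G` the symplectic group and `B` its Borel
subgroup, whose sum over each fibre of `G / B → G / P` vanishes for all minimal parabolic subgroups
`P` over `B`. -/
noncomputable def steinberg (K : Type*) [Field K] (a : ℕ) (F : Type*) [Field F] [Finite F] :
    Subrepresentation (leftTranslation K (Sp a F)) where
  toSubmodule :=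
    { carrier := {φ | (∀ g, ∀ b ∈ borel a F, φ (g * b) = φ g) ∧
        ∀ i g, cosetSum (minParabolic F i) φ g = 0}
      zero_mem' := ⟨fun _ _ _ => rfl, fun _ _ => finsum_zero⟩
      add_mem' := fun hφ hψ => ⟨fun g b hb => congrArg₂ (· + ·) (hφ.1 g b hb) (hψ.1 g b hb),
        fun i g => (finsum_add_distrib (Set.toFinite _) (Set.toFinite _)).trans
          ((congrArg₂ (· + ·) (hφ.2 i g) (hψ.2 i g)).trans (add_zero 0))⟩
      smul_mem' := fun c φ hφ => ⟨fun g b hb => congrArg (c • ·) (hφ.1 g b hb),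
        fun i g => (smul_finsum c _).symm.trans
          ((congrArg (c • ·) (hφ.2 i g)).trans (smul_zero c))⟩ }
  apply_mem_toSubmodule h φ hφ := by
    refine ⟨fun g b hb => ?_, fun i g => ?_⟩
    · simpa [mul_assoc] using hφ.1 (h⁻¹ * g) b hb
    · simpa [cosetSum, mul_assoc] using hφ.2 i (h⁻¹ * g)

lemma exists_mul_rootElement_mul_reflection_mem_borel {i : Fin a} {y : Sp a F}
    (hy : y ∈ minParabolic F i) (hy' : y ∉ borel a F) :
    ∃ c : F, y * rootElement i c * reflection F i ∈ borel a F := by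
  have hne : y.1 (next i) (.inl i) ≠ 0 := (mem_borel_iff_of_mem_minParabolic hy).not.1 hy'
  refine ⟨-y.1 (next i) (next i) / y.1 (next i) (.inl i), ?_⟩
  rw [mul_assoc, rootElement, reflection, levi_mul, mem_borel_iff_of_mem_minParabolic
    (mul_mem hy (levi_mem_minParabolic _))]
  refine (mul_leviMatrix_apply i _ y.1 (next i) 0).trans ?_
  simp only [Matrix.mul_apply, of_apply, cons_val', cons_val_fin_one, cons_val_zero,
    Fin.sum_univ_two, mul_zero, cons_val_one, mul_neg, mul_one, zero_add]
  field_simp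
  ring

section BigCell

variable [Finite F]

lemma apply_eq_zero_of_ascent [CharZero K] {φ : Sp a F → K} (hφ : φ ∈ steinberg K a F)
    {π : weylGroup a} {i : Fin a} (hi : height (π.1 (.inl i)) < height (π.1 (next i)))
    (ih : ∀ u ∈ unipotent a F, ∀ m : Sp a F, IsMonomial (π * simpleReflection i) m → φ (u * m) = 0)
    {u m : Sp a F} (hu : u ∈ unipotent a F) (hm : IsMonomial π m) : φ (u * m) = 0 := by
  have hP : ∀ p ∈ minParabolic F i, p ∉ borel a F → φ (u * m * p) = 0 := fun p hp hpB => by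
    obtain ⟨c, hc⟩ := exists_mul_rootElement_mul_reflection_mem_borel (inv_mem hp) (by simpa)
    have h0 := ih (u * (m * rootElement i c * m⁻¹))
      (mul_mem hu (hm.conj_rootElement_mem_unipotent hi c)) (m * reflection F i)
      (hm.mul (isMonomial_reflection i))
    rw [← h0, ← hφ.1 _ _ hc]
    congr 1
    group
  have hsum := hφ.2 i (u * m)
  rw [cosetSum_eq_card_mul (borel_le_minParabolic i) (hφ.1 (u * m)) hP] at hsum
  exact (mul_eq_zero.1 hsum).resolve_left (Nat.cast_ne_zero.2 Nat.card_pos.ne')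

theorem eq_zero_of_forall_mul_symJ [CharZero K] {φ : Sp a F → K} (hφ : φ ∈ steinberg K a F)
    (h : ∀ u ∈ unipotent a F, φ (u * symJ (Fin a) F) = 0) : φ = 0 := by
  have key : ∀ π : weylGroup a, ∀ u ∈ unipotent a F, ∀ m : Sp a F, IsMonomial π m →
      φ (u * m) = 0 := by
    intro π
    induction π using weylGroup_induction with
    | longest =>
      intro u hu m hm
      have hB := isMonomial_symJ.inv.mul hm
      rw [inv_mul_cancel] at hB
      rw [← h u hu, ← hφ.1 (u * symJ (Fin a) F) _ hB.mem_borel, mul_assoc,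
        mul_inv_cancel_left]
    | ascent π i hi ih => exact fun u hu m hm => apply_eq_zero_of_ascent hφ hi ih hu hm
  funext g
  obtain ⟨u, hu, u', hu', π, m, hm, rfl⟩ := bruhat_decomposition g
  rw [hφ.1 _ _ (radical_le_parabolic _ hu'), key π u hu m hm]
  rfl

end BigCell

section SteinbergVector

/-- A monomial matrix representing `π`. -/
noncomputable def weylRep (F : Type*) [Field F] (π : weylGroup a) : Sp a F :=
  (exists_isMonomial F π).choose

lemma isMonomial_weylRep (π : weylGroup a) : IsMonomial π (weylRep F π) :=
  (exists_isMonomial F π).choose_spec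

open scoped Classical in
/-- The alternating sum of the indicator functions of the cosets `wB`, for `w` in the Weyl group
and `B` the Borel subgroup; its translates by the unipotent subgroup span the Steinberg module. -/
noncomputable def steinbergVector (K : Type*) [Field K] (a : ℕ) (F : Type*) [Field F] (g : Sp a F) :
    K :=
  ∑ π : weylGroup a, (signature π : K) * if (weylRep F π)⁻¹ * g ∈ borel a F then 1 else 0

lemma weylRep_mul_simpleReflection_inv_mul_mem (π : weylGroup a) (i : Fin a) :
    (weylRep F (π * simpleReflection i))⁻¹ * weylRep F π ∈ minParabolic F i := by
  have h := ((isMonomial_weylRep (F := F) (π * simpleReflection i)).inv.mul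
    (isMonomial_weylRep π)).mul (isMonomial_reflection i)
  rw [mul_assoc, inv_mul_cancel] at h
  exact (Subgroup.mul_mem_cancel_right _ (levi_mem_minParabolic _)).1
    (borel_le_minParabolic i h.mem_borel)

/- Right multiplication by a simple reflection permutes the terms of the Steinberg vector, reversing
their signs but not the cosets of the minimal parabolic subgroup. -/
lemma cosetSum_steinbergVector [CharZero K] [Finite F] (i : Fin a) (g : Sp a F) :
    cosetSum (minParabolic F i) (steinbergVector K a F) g = 0 := by
  classical
  have := Fintype.ofFinite (minParabolic F i)
  let term (π : weylGroup a) : K := (signature π : K) *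
    (Nat.card (borel a F) * if (weylRep F π)⁻¹ * g ∈ minParabolic F i then 1 else 0)
  have hsum : cosetSum (minParabolic F i) (steinbergVector K a F) g = ∑ π, term π := by
    simp only [term, ← cosetSum_ite_inv_mul_mem (borel_le_minParabolic i), cosetSum_eq_sum,
      steinbergVector, Finset.mul_sum]
    exact Finset.sum_comm
  have hneg : ∑ π, term π = ∑ π, -term π := by
    refine Fintype.sum_equiv (Equiv.mulRight (simpleReflection i)) _ _ fun π => ?_
    have hmem : (weylRep F π)⁻¹ * g ∈ minParabolic F i ↔
        (weylRep F (π * simpleReflection i))⁻¹ * g ∈ minParabolic F i := by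
      rw [← Subgroup.mul_mem_cancel_left _ (weylRep_mul_simpleReflection_inv_mul_mem π i)]
      group
    simp only [term, Equiv.coe_mulRight, signature_mul_simpleReflection, hmem]
    push_cast
    rw [neg_mul, neg_neg]
  rw [Finset.sum_neg_distrib] at hneg
  rw [hsum, self_eq_neg.1 hneg]

lemma steinbergVector_mem [CharZero K] [Finite F] :
    steinbergVector K a F ∈ steinberg K a F := by
  refine ⟨fun g b hb => ?_, cosetSum_steinbergVector⟩
  refine Finset.sum_congr rfl fun π _ => ?_
  rw [← mul_assoc]
  rw [Subgroup.mul_mem_cancel_right _ hb]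

lemma eq_one_of_height_le {π : weylGroup a} (h : ∀ p, height p ≤ height (π.1 p)) : π = 1 := by
  refine Subtype.ext (Equiv.ext fun p => height_injective ?_)
  have hswap := h p.swap
  rw [weylGroup_apply_swap, height.map_swap, height.map_swap] at hswap
  exact le_antisymm (neg_le_neg_iff.1 hswap) (h p)

variable {w : weylGroup a} {m u : Sp a F}

lemma apply_eq_zero_of_inv_mul_mul_symJ_mem_borel (hm : IsMonomial w m)
    (h : m⁻¹ * (u * symJ (Fin a) F) ∈ borel a F) {p q : Index a}
    (hpq : height q < height p) : u.1 (w.1 p) q.swap = 0 := by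
  have hmul : (u.1 * J (Fin a) F) (w.1 p) q = 0 := by
    change (u * symJ (Fin a) F).1 (w.1 p) q = 0
    rw [← mul_inv_cancel_left m (u * _), Submonoid.coe_mul, Matrix.mul_apply]
    refine Finset.sum_eq_zero fun r _ => ?_
    by_cases hr : p = r
    · rw [← hr, h hpq, mul_zero]
    · rw [hm _ _ fun h => hr (w.1.injective h), zero_mul]
  rw [mul_J_apply] at hmul
  exact (mul_eq_zero.1 hmul).resolve_left (sign_ne_zero q)

lemma eq_longest_of_inv_mul_mul_symJ_mem_borel (hm : IsMonomial w m) (hu : u ∈ unipotent a F)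
    (h : m⁻¹ * (u * symJ (Fin a) F) ∈ borel a F) : w = longest a := by
  have hone : longest a * w = 1 := eq_one_of_height_le fun p => le_of_not_gt fun hlt => by
    have h0 := apply_eq_zero_of_inv_mul_mul_symJ_mem_borel hm h hlt
    rw [show ((longest a * w).1 p).swap = w.1 p from Sum.swap_swap _,
      (mem_unipotent_iff.1 hu).2] at h0
    exact one_ne_zero h0
  rw [eq_inv_of_mul_eq_one_right hone]
  rfl

lemma eq_one_of_inv_mul_mul_symJ_mem_borel (hm : IsMonomial w m) (hu : u ∈ unipotent a F)
    (h : m⁻¹ * (u * symJ (Fin a) F) ∈ borel a F) : u = 1 := by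
  obtain rfl := eq_longest_of_inv_mul_mul_symJ_mem_borel hm hu h
  refine eq_one_of_mem_radical_of_mem_radical_longest hu fun p q hpq => ?_
  change height q.swap ≤ height p.swap at hpq
  rcases hpq.lt_or_eq with hlt | heq
  · have h0 := apply_eq_zero_of_inv_mul_mul_symJ_mem_borel hm h hlt
    have hne : p ≠ q := fun h => hlt.ne (by rw [h])
    rw [Matrix.sub_apply, Matrix.one_apply_ne hne, sub_zero, ← Sum.swap_swap q]
    exact (congrArg (u.1 · q.swap.swap) (Sum.swap_swap p)).symm.trans h0
  · obtain rfl := Sum.swap_leftInverse.injective (height_injective heq)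
    exact hu le_rfl

open scoped Classical in
lemma steinbergVector_mul_symJ {u : Sp a F} (hu : u ∈ unipotent a F) :
    steinbergVector K a F (u * symJ (Fin a) F) =
      if u = 1 then (signature (longest a) : K) else 0 := by
  simp only [steinbergVector, mul_ite, mul_one, mul_zero]
  split_ifs with h
  · subst h
    rw [Finset.sum_eq_single (longest a), if_pos]
    · have hB := (isMonomial_weylRep (F := F) (longest a)).inv.mul isMonomial_symJ
      rw [inv_mul_cancel] at hB
      rw [one_mul]
      exact hB.mem_borel
    · exact fun π _ hπ => if_neg fun hmem =>
        hπ (eq_longest_of_inv_mul_mul_symJ_mem_borel (isMonomial_weylRep π) hu hmem)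
    · simp
  · exact Finset.sum_eq_zero fun π _ => if_neg fun hmem =>
      h (eq_one_of_inv_mul_mul_symJ_mem_borel (isMonomial_weylRep π) hu hmem)

end SteinbergVector

section Irreducible

variable [CharZero K] [Finite F]

/-- The restriction of a function in the Steinberg module to the open Bruhat cell. -/
noncomputable def bigCellRestriction (K : Type*) [Field K] (a : ℕ) (F : Type*) [Field F]
    [Finite F] : (steinberg K a F).toSubmodule →ₗ[K] unipotent a F → K :=
  (LinearMap.funLeft K K fun u : unipotent a F => (u * symJ (Fin a) F : Sp a F)).domRestrict _

lemma bigCellRestriction_bijective : Function.Bijective (bigCellRestriction K a F) := by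
  classical
  refine ⟨(injective_iff_map_eq_zero _).2 fun φ hφ => Subtype.ext <|
    eq_zero_of_forall_mul_symJ φ.2 fun u hu => congrFun hφ ⟨u, hu⟩, fun ψ => ?_⟩
  have := Fintype.ofFinite (unipotent a F)
  have hsign : (signature (longest a) : K) ≠ 0 := Int.cast_ne_zero.2 signature_longest_ne_zero
  refine ⟨∑ u : unipotent a F, (ψ u / (signature (longest a) : K)) •
    (steinberg K a F).toRepresentation u ⟨steinbergVector K a F, steinbergVector_mem⟩, ?_⟩
  funext v
  have hval : ∀ u : unipotent a F, steinbergVector K a F ((u : Sp a F)⁻¹ * (v * symJ (Fin a) F)) =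
      if u = v then (signature (longest a) : K) else 0 := fun u => by
    rw [← mul_assoc, steinbergVector_mul_symJ (mul_mem (inv_mem u.2) v.2)]
    simp only [inv_mul_eq_one, Subtype.coe_inj]
  rw [map_sum, Finset.sum_apply]
  calc ∑ u, bigCellRestriction K a F _ v = ∑ u, if u = v then ψ u else 0 :=
        Finset.sum_congr rfl fun u _ => by
          rw [map_smul, Pi.smul_apply, smul_eq_mul]
          refine (congrArg _ (hval u)).trans ?_
          rw [mul_ite, div_mul_cancel₀ _ hsign, mul_zero]
    _ = ψ v := by simp

theorem finrank_steinberg :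
    Module.finrank K (steinberg K a F).toSubmodule = Nat.card (unipotent a F) := by
  have := Fintype.ofFinite (unipotent a F)
  rw [(LinearEquiv.ofBijective _ bigCellRestriction_bijective).finrank_eq,
    Module.finrank_fintype_fun_eq_card, Nat.card_eq_fintype_card]

lemma exists_mem_forall_borel_eq (σ : Subrepresentation (steinberg K a F).toRepresentation)
    (hσ : σ ≠ ⊥) : ∃ β ∈ σ, β ≠ 0 ∧ ∀ b ∈ borel a F, ∀ g, β.1 (b * g) = β.1 g := by
  have := Fintype.ofFinite (borel a F)
  obtain ⟨φ, hφ, hne⟩ : ∃ φ ∈ σ, φ ≠ 0 := Submodule.exists_mem_ne_zero_of_ne_bot fun h =>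
    hσ (Subrepresentation.toSubmodule_injective h)
  obtain ⟨h, hh⟩ : ∃ h, φ.1 h ≠ 0 := Function.ne_iff.1 fun h0 => hne (Subtype.ext h0)
  let ρ : Representation K (Sp a F) _ := (steinberg K a F).toRepresentation
  let ρB : Representation K (borel a F) _ := ρ.comp (borel a F).subtype
  let ψ := ρ h⁻¹ φ
  have hψ : ψ ∈ σ := σ.apply_mem_toSubmodule _ hφ
  refine ⟨ρB.norm ψ, ?_, ?_, ?_⟩
  · rw [Representation.norm, LinearMap.sum_apply]
    exact σ.toSubmodule.sum_mem fun b _ => σ.apply_mem_toSubmodule _ hψ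
  · have hval : (ρB.norm ψ).1 1 = Nat.card (borel a F) * φ.1 h := by
      rw [Representation.norm, LinearMap.sum_apply, Submodule.coe_sum, Finset.sum_apply,
        Nat.card_eq_fintype_card, ← Finset.card_univ, ← nsmul_eq_mul, ← Finset.sum_const]
      refine Finset.sum_congr rfl fun b _ => ?_
      change φ.1 (h⁻¹⁻¹ * ((b : Sp a F)⁻¹ * 1)) = φ.1 h
      rw [inv_inv, mul_one, φ.2.1 h _ (inv_mem b.2)]
    intro h0
    rw [h0] at hval
    exact mul_ne_zero (Nat.cast_ne_zero.2 Nat.card_pos.ne') hh hval.symm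
  · intro b hb g
    have hfix := congrFun (congrArg Subtype.val (ρB.self_norm_apply ⟨b, hb⟩ ψ)) (b * g)
    rw [← hfix]
    change (ρB.norm ψ).1 (b⁻¹ * (b * g)) = _
    rw [inv_mul_cancel_left]

lemma smul_eq_smul_of_forall_borel_eq {β γ : (steinberg K a F).toSubmodule}
    (hβ : ∀ b ∈ borel a F, ∀ g, β.1 (b * g) = β.1 g)
    (hγ : ∀ b ∈ borel a F, ∀ g, γ.1 (b * g) = γ.1 g) :
    γ.1 (symJ (Fin a) F) • β = β.1 (symJ (Fin a) F) • γ := by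
  refine sub_eq_zero.1 (Subtype.ext (eq_zero_of_forall_mul_symJ (Subtype.prop _) fun u hu => ?_))
  have hu' := radical_le_parabolic _ hu
  change γ.1 _ * β.1 (u * _) - β.1 _ * γ.1 (u * _) = 0
  rw [hβ u hu', hγ u hu', mul_comm, sub_self]

lemma apply_symJ_ne_zero {β : (steinberg K a F).toSubmodule} (hne : β ≠ 0)
    (hβ : ∀ b ∈ borel a F, ∀ g, β.1 (b * g) = β.1 g) : β.1 (symJ (Fin a) F) ≠ 0 := fun h =>
  hne <| Subtype.ext <| eq_zero_of_forall_mul_symJ β.2 fun u hu => by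
    rw [hβ u (radical_le_parabolic _ hu), h]

/- By Maschke's theorem it suffices that two nonzero subrepresentations always meet; each contains a
nonzero function fixed by the Borel subgroup, and such functions are unique up to scalars. -/
theorem isIrreducible_steinberg : (steinberg K a F).toRepresentation.IsIrreducible := by
  have hG : NeZero (Nat.card (Sp a F) : K) := ⟨Nat.cast_ne_zero.2 Nat.card_pos.ne'⟩
  refine { exists_pair_ne := ⟨⊥, ⊤, fun h => ?_⟩, eq_bot_or_eq_top := fun σ => ?_ }
  · have hrank := finrank_steinberg (K := K) (a := a) (F := F)
    rw [← finrank_top, ← show (⊥ : Submodule K (steinberg K a F).toSubmodule) = ⊤ from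
      congrArg Subrepresentation.toSubmodule h, finrank_bot] at hrank
    exact Nat.card_pos.ne hrank
  · obtain ⟨τ, hτ⟩ := exists_isCompl σ
    refine or_iff_not_imp_left.2 fun hσ => ?_
    have hτbot : τ = ⊥ := by
      by_contra hτne
      obtain ⟨β, hβσ, hβ, hβfix⟩ := exists_mem_forall_borel_eq σ hσ
      obtain ⟨γ, hγτ, hγ, hγfix⟩ := exists_mem_forall_borel_eq τ hτne
      have hmem : γ.1 (symJ (Fin a) F) • β ∈ σ ⊓ τ := ⟨σ.toSubmodule.smul_mem _ hβσ, by
        rw [smul_eq_smul_of_forall_borel_eq hβfix hγfix]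
        exact τ.toSubmodule.smul_mem _ hγτ⟩
      rw [hτ.inf_eq_bot] at hmem
      exact smul_ne_zero (apply_symJ_ne_zero hγ hγfix) hβ hmem
    rw [← hτ.sup_eq_top, hτbot, sup_bot_eq]

end Irreducible

end SteinbergModule

end SpSteinberg

open SpSteinberg DefectZero CategoryTheory in
theorem Sp_defect_zero_count_general.{u} (ℓ : ℕ) [Fact ℓ.Prime] (F K : Type u) [Field F] [Finite F]
    [CharP F ℓ] [Field K] [IsAlgClosed K] [CharZero K] (a : ℕ) :
    Set.ncard { f : Sp a F → K | ∃ V : FDRep K (Sp a F), Simple V ∧ V.character = f ∧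
      padicValNat ℓ (Module.finrank K V) = padicValNat ℓ (Nat.card (Sp a F)) } = 1 := by
  have : NeZero (Nat.card (Sp a F) : K) := ⟨Nat.cast_ne_zero.2 Nat.card_pos.ne'⟩
  let St := FDRep.of (steinberg K a F).toRepresentation
  have St_irreducible : Representation.IsIrreducible St.ρ := isIrreducible_steinberg
  have St_defect_zero : padicValNat ℓ (Module.finrank K St) = padicValNat ℓ (Nat.card (Sp a F)) :=
    (congrArg _ finrank_steinberg).trans (padicValNat_card_unipotent ℓ)
  refine Set.ncard_eq_one.2 ⟨St.character, Set.ext fun f => ⟨?_, ?_⟩⟩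
  · rintro ⟨V, V_simple, rfl, V_defect_zero⟩
    have V_irreducible : Representation.IsIrreducible V.ρ := (simple_iff_isIrreducible V).1 V_simple
    obtain ⟨e⟩ := nonempty_equiv_of_defect_zero St.ρ V.ρ (isPGroup_unipotent ℓ)
      cosetSum_unipotent_mul_comm St_defect_zero V_defect_zero
    exact Representation.char_iso e
  · rintro rfl
    exact ⟨St, (simple_iff_isIrreducible St).2 St_irreducible, rfl, St_defect_zero⟩

/-- For every prime `ℓ` and every `a ≥ 1`, the symplectic group `Sp_{2a}(𝔽_ℓ)` has exactly one
irreducible complex character of `ℓ`-defect zero (the Steinberg character).  Irreducible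
characters are counted as the character functions of simple objects of
`FDRep ℂ (Sp_{2a}(𝔽_ℓ))`, and a character has `ℓ`-defect zero if the `ℓ`-adic valuation of
its degree equals the `ℓ`-adic valuation of the group order. -/
theorem Sp_defect_zero_count (ℓ : ℕ) (hℓ : ℓ.Prime) (a : ℕ) (ha : 1 ≤ a) :
    Set.ncard { f : Matrix.symplecticGroup (Fin a) (ZMod ℓ) → ℂ |
      ∃ V : FDRep ℂ (Matrix.symplecticGroup (Fin a) (ZMod ℓ)),
        CategoryTheory.Simple V ∧ V.character = f ∧
        padicValNat ℓ (Module.finrank ℂ V) =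
          padicValNat ℓ (Nat.card (Matrix.symplecticGroup (Fin a) (ZMod ℓ))) } = 1 := by
  have : Fact ℓ.Prime := ⟨hℓ⟩
  exact Sp_defect_zero_count_general ℓ (ZMod ℓ) ℂ a
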